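/- Let G be any group and let W = G ≀ ℤ be the restricted wreath product. Then for every n ≥ 1 and every separable dual Banach W-module E, the bounded cohomology Hb^n(W, E) vanishes: every bounded function f : W^n → E with δf = 0 equals δb for some bounded b : W^{n−1} → E. -/

import Mathlib

open scoped BigOperators

/-- A cochain (function into a normed space) is bounded if its norms are uniformly bounded. -/
def IsBddCochain {G : Type*} {E : Type*} [NormedAddCommGroup E] {n : ℕ}
    (f : (Fin n → G) → E) : Prop :=
  ∃ C : ℝ, ∀ g, ‖f g‖ ≤ C

/-- The inhomogeneous coboundary operator of bounded cohomology, for an action `π` of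
`G` on `E`:
`(δf)(g₁,…,g_{n+1}) = g₁•f(g₂,…,g_{n+1}) + ∑_{i=1}^{n} (−1)^i f(g₁,…,g_i·g_{i+1},…,g_{n+1})`
`+ (−1)^{n+1} f(g₁,…,g_n)`. -/
def bddDelta {G : Type*} [Group G] {E : Type*} [NormedAddCommGroup E] [Module ℝ E]
    (π : G → E → E) (n : ℕ) (f : (Fin n → G) → E) : (Fin (n + 1) → G) → E :=
  fun g =>
    π (g 0) (f (fun j => g j.succ)) +
    (∑ i : Fin n, ((-1 : ℝ) ^ ((i : ℕ) + 1)) •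
      f (fun j => if (j : ℕ) < (i : ℕ) then g (Fin.castSucc j)
        else if (j : ℕ) = (i : ℕ) then g (Fin.castSucc j) * g j.succ
        else g j.succ)) +
    ((-1 : ℝ) ^ (n + 1)) • f (fun j => g (Fin.castSucc j))

/-- Vanishing of the bounded cohomology `Hb^n(G,E)` for all `n ≥ 1`, with respect to the
`G`-action `π` on `E`: every bounded cocycle of degree `n ≥ 1` is the coboundary of a
bounded cochain. -/
def HbVanish {G : Type*} [Group G] {E : Type*} [NormedAddCommGroup E] [Module ℝ E]
    (π : G → E → E) : Prop :=
  ∀ (n : ℕ) (f : (Fin (n + 1) → G) → E), IsBddCochain f →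
    bddDelta π (n + 1) f = 0 →
    ∃ b : (Fin n → G) → E, IsBddCochain b ∧ bddDelta π n b = f

/-- A group is boundedly acyclic if `Hb^n(G,ℝ) = 0` for all `n ≥ 1`, where `ℝ` carries
the trivial `G`-action. -/
def BoundedlyAcyclic (G : Type*) [Group G] : Prop :=
  HbVanish (G := G) (E := ℝ) (fun _ v => v)

/-- The restricted product of copies of `G` indexed by `ι`: finitely supported
functions `ι → G` under pointwise multiplication. -/
def finSupp (ι : Type*) (G : Type*) [Group G] : Subgroup (ι → G) where
  carrier := {f | (Function.mulSupport f).Finite}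
  mul_mem' := by
    intro a b ha hb
    exact Set.Finite.subset (ha.union hb) (Function.mulSupport_mul a b)
  one_mem' := by simp [Function.mulSupport_one]
  inv_mem' := by
    intro a ha
    simpa [Function.mulSupport_inv] using ha

/-- The shift action of `ℤ` (written multiplicatively) on the restricted product
`⊕_ℤ G`: `(k • f) n = f (n - k)`. -/
def shiftHom (G : Type*) [Group G] :
    Multiplicative ℤ →* MulAut (finSupp ℤ G) where
  toFun k :=
    { toFun := fun f => ⟨fun n => (f : ℤ → G) (n - k.toAdd),
        Set.Finite.preimage (Set.injOn_of_injective
          (fun a b hab => by omega)) f.2⟩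
      invFun := fun f => ⟨fun n => (f : ℤ → G) (n + k.toAdd),
        Set.Finite.preimage (Set.injOn_of_injective
          (fun a b hab => by omega)) f.2⟩
      left_inv := by
        intro f; ext n; simp
      right_inv := by
        intro f; ext n; simp
      map_mul' := by
        intro f g; rfl }
  map_one' := by
    ext f n; simp
  map_mul' := by
    intro k l
    ext f n
    show (f : ℤ → G) (n - (k.toAdd + l.toAdd)) = (f : ℤ → G) (n - k.toAdd - l.toAdd)
    rw [sub_add_eq_sub_sub]

/-- The restricted wreath product `W = G ≀ ℤ = (⊕_ℤ G) ⋊ ℤ`. -/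
abbrev WreathZ (G : Type*) [Group G] :=
  SemidirectProduct (finSupp ℤ G) (Multiplicative ℤ) (shiftHom G)

/-- The contragredient action of `G` on the continuous dual of `F` induced by an
isometric action `ρ` of `G` on `F`: `(g • φ)(v) = φ (g⁻¹ • v)`. -/
def contragredient {G : Type*} [Group G] {F : Type*} [NormedAddCommGroup F]
    [NormedSpace ℝ F] (ρ : G →* (F ≃ₗᵢ[ℝ] F)) : G → (F →L[ℝ] ℝ) → (F →L[ℝ] ℝ) :=
  fun g φ => φ.comp (ρ g⁻¹).toLinearIsometry.toContinuousLinearMap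

/-!
Write an equivariant cochain homogeneously and average each of its arguments over right translates
by a mean `κ` on `W`. This averaging is chain homotopic to the identity, so a cocycle is a
coboundary as soon as its average depends only on the degree.

For countable `G` there is a mean `κ` for which it does. Start from a quasi-invariant probability
measure on `G`, take its product over the lamps, and make the result invariant under the amenable
group `ℤ`. Then the average depends only on the lamps of the arguments, and moving all lamps at
once by `k ∈ ℤ` acts on it by an isometry. If shifts of a lamp configuration have disjoint supports,
their centred densities with respect to `κ` are orthogonal, so by Bessel's inequality left
translation by them is asymptotically invisible to `κ`. Far away shifts moreover commute with any
given configuration. Since `E = F*` is separable, Baire's theorem in `F` gives weak-* slices of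
arbitrarily small norm diameter of the bounded set of averages, and this upgrades the asymptotic
weak-* invariance to equality in norm.

For general `G`, the primitives over `H ≀ ℤ`, for `H` a finitely generated subgroup of `G`, are
uniformly bounded. Extend them by zero; a weak-* limit along an ultrafilter is a primitive over
`G ≀ ℤ`.
-/

open Filter Topology Function
open scoped ENNReal

section Means

variable {ι X Y : Type*}

/-- The algebra `ℓ^∞(X)` of bounded real functions on a set `X`. -/
def boundedFunctions (X : Type*) : Subalgebra ℝ (X → ℝ) where
  carrier := {f | ∃ C, ∀ x, |f x| ≤ C}
  mul_mem' := by
    rintro f g ⟨A, hA⟩ ⟨B, hB⟩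
    refine ⟨A * B, fun x ↦ ?_⟩
    rw [Pi.mul_apply, abs_mul]
    exact mul_le_mul (hA x) (hB x) (abs_nonneg _) ((abs_nonneg _).trans (hA x))
  add_mem' := by
    rintro f g ⟨A, hA⟩ ⟨B, hB⟩
    exact ⟨A + B, fun x ↦ (abs_add_le _ _).trans (add_le_add (hA x) (hB x))⟩
  algebraMap_mem' r := ⟨|r|, fun _ ↦ le_rfl⟩

theorem comp_mem_boundedFunctions {f : Y → ℝ} (hf : f ∈ boundedFunctions Y) (φ : X → Y) :
    (fun x ↦ f (φ x)) ∈ boundedFunctions X :=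
  let ⟨C, hC⟩ := hf
  ⟨C, fun x ↦ hC (φ x)⟩

/-- A mean (finitely additive probability measure) on a set `X`: a positive unital functional on
the bounded functions. It is encoded as a linear functional on all functions, with arbitrary
values on the unbounded ones, so that linearity has no side conditions. -/
structure Mean (X : Type*) extends (X → ℝ) →ₗ[ℝ] ℝ where
  nonneg' : ∀ f ∈ boundedFunctions X, (∀ x, 0 ≤ f x) → 0 ≤ toFun f
  one' : toFun 1 = 1

namespace Mean

instance : FunLike (Mean X) (X → ℝ) ℝ where
  coe m := m.toFun
  coe_injective m m' h := by
    cases m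
    cases m'
    congr
    exact DFunLike.coe_injective h

instance : LinearMapClass (Mean X) ℝ (X → ℝ) ℝ where
  map_add m := m.map_add'
  map_smulₛₗ m := m.map_smul'

variable (m : Mean X)

theorem nonneg {f : X → ℝ} (hf : f ∈ boundedFunctions X) (h : ∀ x, 0 ≤ f x) : 0 ≤ m f :=
  m.nonneg' f hf h

theorem map_fun_add (f g : X → ℝ) : m (fun x ↦ f x + g x) = m f + m g :=
  map_add m f g

theorem map_fun_sub (f g : X → ℝ) : m (fun x ↦ f x - g x) = m f - m g :=
  map_sub m f g

theorem map_fun_const_mul (c : ℝ) (f : X → ℝ) : m (fun x ↦ c * f x) = c * m f :=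
  map_smul m c f

theorem map_fun_sum (s : Finset ι) (f : ι → X → ℝ) :
    m (fun x ↦ ∑ i ∈ s, f i x) = ∑ i ∈ s, m (f i) := by
  rw [← map_sum]
  congr 1
  ext x
  simp

theorem map_fun_const (c : ℝ) : m (fun _ ↦ c) = c := by
  have h : m 1 = 1 := m.one'
  simpa [h] using m.map_fun_const_mul c 1

theorem mono {f g : X → ℝ} (hf : f ∈ boundedFunctions X) (hg : g ∈ boundedFunctions X)
    (h : ∀ x, f x ≤ g x) : m f ≤ m g := by
  have := m.nonneg (sub_mem hg hf) fun x ↦ sub_nonneg.2 (h x)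
  rwa [map_sub, sub_nonneg] at this

theorem abs_le {f : X → ℝ} {C : ℝ} (h : ∀ x, |f x| ≤ C) : |m f| ≤ C := by
  have hf : f ∈ boundedFunctions X := ⟨C, h⟩
  have hconst (c : ℝ) : (fun _ : X ↦ c) ∈ boundedFunctions X := ⟨|c|, fun _ ↦ le_rfl⟩
  refine _root_.abs_le.2 ⟨?_, ?_⟩
  · simpa only [map_fun_const] using m.mono (hconst (-C)) hf fun x ↦ (_root_.abs_le.1 (h x)).1
  · simpa only [map_fun_const] using m.mono hf (hconst C) fun x ↦ (_root_.abs_le.1 (h x)).2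

/-- The point mass at `x`. -/
def dirac (x : X) : Mean X where
  toLinearMap := LinearMap.proj x
  nonneg' _ _ h := h x
  one' := rfl

@[simp]
theorem dirac_apply (x : X) (f : X → ℝ) : dirac x f = f x :=
  rfl

/-- The uniform distribution on a nonempty finite set. -/
noncomputable def uniform (s : Finset X) (hs : s.Nonempty) : Mean X where
  toFun f := (s.card : ℝ)⁻¹ * ∑ x ∈ s, f x
  map_add' f g := by simp only [Pi.add_apply, Finset.sum_add_distrib, mul_add]
  map_smul' c f := by
    simp only [Pi.smul_apply, smul_eq_mul, ← Finset.mul_sum, RingHom.id_apply, mul_left_comm]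
  nonneg' f _ h := mul_nonneg (by positivity) (Finset.sum_nonneg fun x _ ↦ h x)
  one' := by
    have := hs.card_ne_zero
    simp [this]

theorem uniform_apply (s : Finset X) (hs : s.Nonempty) (f : X → ℝ) :
    uniform s hs f = (s.card : ℝ)⁻¹ * ∑ x ∈ s, f x :=
  rfl

/-- The push-forward of a mean. -/
def map (φ : X → Y) (m : Mean X) : Mean Y where
  toLinearMap := m.toLinearMap ∘ₗ LinearMap.funLeft ℝ ℝ φ
  nonneg' _ hf h := m.nonneg (comp_mem_boundedFunctions hf φ) fun x ↦ h (φ x)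
  one' := m.one'

@[simp]
theorem map_apply (φ : X → Y) (f : Y → ℝ) : m.map φ f = m fun x ↦ f (φ x) :=
  rfl

theorem apply_mem_boundedFunctions (k : X → Mean Y) {f : Y → ℝ} (hf : f ∈ boundedFunctions Y) :
    (fun x ↦ k x f) ∈ boundedFunctions X :=
  let ⟨C, hC⟩ := hf
  ⟨C, fun x ↦ (k x).abs_le hC⟩

/-- The mixture of the means `k x`, where `x` is distributed according to `m`. -/
def bind (m : Mean X) (k : X → Mean Y) : Mean Y where
  toLinearMap := m.toLinearMap ∘ₗ LinearMap.pi fun x ↦ (k x).toLinearMap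
  nonneg' _ hf h := m.nonneg (apply_mem_boundedFunctions k hf) fun x ↦ (k x).nonneg hf h
  one' := by
    have h : (fun x ↦ k x 1) = fun _ ↦ 1 := funext fun x ↦ (k x).one'
    exact (congrArg m h).trans m.one'

@[simp]
theorem bind_apply (k : X → Mean Y) (f : Y → ℝ) : m.bind k f = m fun x ↦ k x f :=
  rfl

theorem exists_eq_of_bounded (L : (X → ℝ) → ℝ)
    (hadd : ∀ f ∈ boundedFunctions X, ∀ g ∈ boundedFunctions X, L (f + g) = L f + L g)
    (hsmul : ∀ (c : ℝ), ∀ f ∈ boundedFunctions X, L (c • f) = c * L f)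
    (hnonneg : ∀ f ∈ boundedFunctions X, (∀ x, 0 ≤ f x) → 0 ≤ L f) (hone : L 1 = 1) :
    ∃ m : Mean X, ∀ f ∈ boundedFunctions X, m f = L f := by
  let L₀ : Subalgebra.toSubmodule (boundedFunctions X) →ₗ[ℝ] ℝ :=
    { toFun f := L f
      map_add' f g := hadd f f.2 g g.2
      map_smul' c f := hsmul c f f.2 }
  obtain ⟨M, hM⟩ := L₀.exists_extend
  have hML : ∀ f ∈ boundedFunctions X, M f = L f := fun f hf ↦ LinearMap.congr_fun hM ⟨f, hf⟩
  exact ⟨⟨M, fun f hf h ↦ (hnonneg f hf h).trans_eq (hML f hf).symm,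
    (hML 1 (one_mem _)).trans hone⟩, hML⟩

theorem exists_tendsto_of_ultrafilter (U : Ultrafilter X) :
    ∃ m : Mean X, ∀ f ∈ boundedFunctions X, Tendsto f U (𝓝 (m f)) := by
  have hlim (f : X → ℝ) : ∃ a, f ∈ boundedFunctions X → Tendsto f U (𝓝 a) := by
    by_cases hf : f ∈ boundedFunctions X
    · obtain ⟨C, hC⟩ := hf
      obtain ⟨a, -, ha⟩ := (isCompact_Icc (a := -C) (b := C)).ultrafilter_le_nhds (U.map f)
        (le_principal_iff.2 <| U.eventually_map.2 <| Eventually.of_forall fun x ↦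
          _root_.abs_le.1 (hC x))
      exact ⟨a, fun _ ↦ ha⟩
    · exact ⟨0, fun h ↦ absurd h hf⟩
  choose L hL using hlim
  obtain ⟨m, hm⟩ := exists_eq_of_bounded L
    (fun f hf g hg ↦ tendsto_nhds_unique (hL _ (add_mem hf hg)) ((hL f hf).add (hL g hg)))
    (fun c f hf ↦ tendsto_nhds_unique (hL _ (Subalgebra.smul_mem _ hf c))
      ((hL f hf).const_mul c))
    (fun f hf h ↦ ge_of_tendsto' (hL f hf) h)
    (tendsto_nhds_unique (hL 1 (one_mem _)) tendsto_const_nhds)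
  exact ⟨m, fun f hf ↦ by rw [hm f hf]; exact hL f hf⟩

theorem exists_ultralimit (U : Ultrafilter ι) (k : ι → Mean X) :
    ∃ m : Mean X, ∀ f ∈ boundedFunctions X, Tendsto (fun i ↦ k i f) U (𝓝 (m f)) := by
  obtain ⟨u, hu⟩ := exists_tendsto_of_ultrafilter U
  exact ⟨u.bind k, fun f hf ↦ hu _ (apply_mem_boundedFunctions k hf)⟩

theorem exists_eq_tsum {p : X → ℝ} (hp : ∀ x, 0 ≤ p x) (hsum : HasSum p 1) :
    ∃ m : Mean X, ∀ f ∈ boundedFunctions X, m f = ∑' x, p x * f x := by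
  have hs : ∀ f ∈ boundedFunctions X, Summable fun x ↦ p x * f x := by
    rintro f ⟨C, hC⟩
    refine (hsum.summable.mul_right C).of_norm_bounded fun x ↦ ?_
    rw [Real.norm_eq_abs, abs_mul, abs_of_nonneg (hp x)]
    exact mul_le_mul_of_nonneg_left (hC x) (hp x)
  refine exists_eq_of_bounded (fun f ↦ ∑' x, p x * f x) (fun f hf g hg ↦ ?_) (fun c f _ ↦ ?_)
    (fun f _ h ↦ tsum_nonneg fun x ↦ mul_nonneg (hp x) (h x)) ?_
  · simp only [Pi.add_apply, mul_add]
    exact (hs f hf).tsum_add (hs g hg)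
  · simp only [Pi.smul_apply, smul_eq_mul, mul_left_comm (p _), tsum_mul_left]
  · simpa using hsum.tsum_eq

theorem abs_uniform_range_succ_sub_le {f : ℕ → ℝ} {C : ℝ} (hC : ∀ i, |f i| ≤ C) (n : ℕ) :
    |uniform (Finset.range (n + 1)) Finset.nonempty_range_add_one (fun i ↦ f (i + 1)) -
      uniform (Finset.range (n + 1)) Finset.nonempty_range_add_one f| ≤
        ((n : ℝ) + 1)⁻¹ * (C + C) := by
  rw [uniform_apply, uniform_apply, ← mul_sub, ← Finset.sum_sub_distrib, Finset.sum_range_sub,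
    Finset.card_range, abs_mul, abs_of_nonneg (by positivity), Nat.cast_succ]
  gcongr
  exact (abs_sub _ _).trans (add_le_add (hC _) (hC _))

theorem apply_mul_eq_of_apply_one_mul_eq {m : Mean (Multiplicative ℤ)}
    (h : ∀ f ∈ boundedFunctions (Multiplicative ℤ), m (fun x ↦ f (.ofAdd 1 * x)) = m f)
    (k : Multiplicative ℤ) {f : Multiplicative ℤ → ℝ}
    (hf : f ∈ boundedFunctions (Multiplicative ℤ)) : m (fun x ↦ f (k * x)) = m f := by
  induction k using Multiplicative.rec with | _ k =>
  induction k using Int.induction_on generalizing f with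
  | zero => simp
  | succ i ih =>
    have := h _ (comp_mem_boundedFunctions hf (.ofAdd (i : ℤ) * ·))
    rw [ih hf] at this
    simpa only [ofAdd_add, mul_assoc] using this
  | pred i ih =>
    have := h _ (comp_mem_boundedFunctions hf (.ofAdd (-(i : ℤ) - 1) * ·))
    simp only [← mul_assoc, ← ofAdd_add, sub_add_cancel] at this
    rw [← this, ih hf]

theorem exists_invariant_multiplicative_int :
    ∃ m : Mean (Multiplicative ℤ), ∀ k, ∀ f ∈ boundedFunctions (Multiplicative ℤ),
      m (fun x ↦ f (k * x)) = m f := by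
  obtain ⟨m, hm⟩ := exists_ultralimit (hyperfilter ℕ) fun n ↦
    (uniform (Finset.range (n + 1)) Finset.nonempty_range_add_one).map
      fun i : ℕ ↦ Multiplicative.ofAdd (i : ℤ)
  refine ⟨m, fun k f hf ↦ apply_mul_eq_of_apply_one_mul_eq (fun f hf ↦ ?_) k hf⟩
  have hlim := (hm _ (comp_mem_boundedFunctions hf (.ofAdd 1 * ·))).sub (hm f hf)
  refine sub_eq_zero.1 (tendsto_nhds_unique hlim ?_)
  obtain ⟨C, hC⟩ := hf
  have hdecay : Tendsto (fun n : ℕ ↦ ((n : ℝ) + 1)⁻¹ * (C + C)) (hyperfilter ℕ) (𝓝 0) := by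
    have := (tendsto_inv_atTop_zero.comp
      (tendsto_atTop_add_const_right atTop (1 : ℝ) tendsto_natCast_atTop_atTop)).mul_const (C + C)
    rw [zero_mul] at this
    exact this.mono_left Nat.hyperfilter_le_atTop
  refine squeeze_zero_norm (fun n ↦ ?_) hdecay
  simpa [← ofAdd_add, add_comm] using
    abs_uniform_range_succ_sub_le (f := fun i ↦ f (.ofAdd (i : ℤ))) (fun i ↦ hC _) n

end Mean

end Means

section SmallSlices

variable {ι V : Type*} [NormedAddCommGroup V] [NormedSpace ℝ V] {P : ι → V →L[ℝ] ℝ} {C : ℝ}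

theorem Mean.exists_weakStar_integral (m : Mean ι) (hP : ∀ i, ‖P i‖ ≤ C) :
    ∃ φ : V →L[ℝ] ℝ, ‖φ‖ ≤ C ∧ ∀ v, φ v = m fun i ↦ P i v := by
  have hC : 0 ≤ C := (abs_nonneg _).trans (m.abs_le fun i ↦ (abs_norm (P i)).trans_le (hP i))
  refine ⟨(m.toLinearMap ∘ₗ LinearMap.pi fun i ↦ (P i).toLinearMap).mkContinuous C fun v ↦
    m.abs_le fun i ↦ (P i).le_of_opNorm_le (hP i) v, LinearMap.mkContinuous_norm_le _ hC _,
    fun v ↦ rfl⟩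

/-- The support function of a family of functionals. -/
noncomputable def supportFunction (P : ι → V →L[ℝ] ℝ) (v : V) : ℝ :=
  ⨆ i, P i v

theorem le_supportFunction (hP : ∀ i, ‖P i‖ ≤ C) (i : ι) (v : V) : P i v ≤ supportFunction P v :=
  le_ciSup ⟨C * ‖v‖, Set.forall_mem_range.2 fun j ↦
    le_of_abs_le ((P j).le_of_opNorm_le (hP j) v)⟩ i

theorem continuous_supportFunction [Nonempty ι] (hP : ∀ i, ‖P i‖ ≤ C) :
    Continuous (supportFunction P) := by
  have hC : 0 ≤ C := (norm_nonneg _).trans (hP (Classical.arbitrary ι))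
  refine (LipschitzWith.of_le_add_mul C.toNNReal fun v w ↦ ciSup_le fun i ↦ ?_).continuous
  calc P i v = P i w + P i (v - w) := by rw [← map_add, add_sub_cancel]
    _ ≤ supportFunction P w + C.toNNReal * dist v w := by
      rw [Real.coe_toNNReal C hC, dist_eq_norm]
      exact add_le_add (le_supportFunction hP i w)
        (le_of_abs_le ((P i).le_of_opNorm_le (hP i) (v - w)))

theorem exists_lt_supportFunction [Nonempty ι] (v : V) {η : ℝ} (hη : 0 < η) :
    ∃ i, supportFunction P v - η < P i v :=
  exists_lt_of_lt_ciSup (sub_lt_self _ hη)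

theorem exists_subgradient_supportFunction [Nonempty ι] (hP : ∀ i, ‖P i‖ ≤ C) (v : V) :
    ∃ φ : V →L[ℝ] ℝ, φ v = supportFunction P v ∧ ∀ w, φ w ≤ supportFunction P w := by
  have hbdd (i : ℕ → ι) (w : V) : (fun n ↦ P (i n) w) ∈ boundedFunctions ℕ :=
    ⟨C * ‖w‖, fun n ↦ (P (i n)).le_of_opNorm_le (hP (i n)) w⟩
  choose i hi using fun n : ℕ ↦
    exists_lt_supportFunction (P := P) v (η := 1 / ((n : ℝ) + 1)) (by positivity)
  obtain ⟨m, hm⟩ := Mean.exists_tendsto_of_ultrafilter (hyperfilter ℕ)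
  obtain ⟨φ, -, hφ⟩ := m.exists_weakStar_integral fun n ↦ hP (i n)
  refine ⟨φ, ?_, fun w ↦ ?_⟩
  · refine (hφ v).trans (tendsto_nhds_unique (hm _ (hbdd i v)) ?_)
    refine Tendsto.mono_left ?_ Nat.hyperfilter_le_atTop
    refine tendsto_of_tendsto_of_tendsto_of_le_of_le ?_ tendsto_const_nhds (fun n ↦ (hi n).le)
      fun n ↦ le_supportFunction hP _ v
    simpa using tendsto_const_nhds.sub (tendsto_one_div_add_atTop_nhds_zero_nat (𝕜 := ℝ))
  · rw [hφ]
    exact le_of_tendsto' (hm _ (hbdd i w)) fun n ↦ le_supportFunction hP _ w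

/-- The vectors at which `x` is an `ε`-subgradient of the support function, tested on downward
increments. -/
def almostSubgradientSet (P : ι → V →L[ℝ] ℝ) (x : V →L[ℝ] ℝ) (ε : ℝ) : Set V :=
  {v | ∀ h, supportFunction P v - supportFunction P (v - h) ≤ x h + ε * ‖h‖}

theorem isClosed_almostSubgradientSet [Nonempty ι] (hP : ∀ i, ‖P i‖ ≤ C) (x : V →L[ℝ] ℝ) (ε : ℝ) :
    IsClosed (almostSubgradientSet P x ε) := by
  have hp := continuous_supportFunction hP
  simp only [almostSubgradientSet, Set.ofPred_forall]
  exact isClosed_iInter fun h ↦ isClosed_le (by fun_prop) continuous_const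

theorem mem_almostSubgradientSet_of_norm_sub_le {φ x : V →L[ℝ] ℝ} {v : V} {ε : ℝ}
    (hv : φ v = supportFunction P v) (hφ : ∀ w, φ w ≤ supportFunction P w) (hx : ‖φ - x‖ ≤ ε) :
    v ∈ almostSubgradientSet P x ε := by
  intro h
  have hsub : φ v - φ h ≤ supportFunction P (v - h) := by
    rw [← map_sub]
    exact hφ (v - h)
  have hclose : φ h - x h ≤ ε * ‖h‖ := le_of_abs_le ((φ - x).le_of_opNorm_le hx h)
  linarith

theorem norm_sub_le_of_mem_slice (hP : ∀ i, ‖P i‖ ≤ C) {v : V} {x : V →L[ℝ] ℝ} {ε s : ℝ}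
    (hε : 0 ≤ ε) (hs : 0 < s)
    (hball : Metric.closedBall v s ⊆ almostSubgradientSet P x ε) {i : ι}
    (hi : supportFunction P v - s * ε < P i v) : ‖P i - x‖ ≤ 2 * ε := by
  have hunit : ∀ h : V, ‖h‖ = 1 → (P i - x) h ≤ 2 * ε := by
    intro h hh
    have hsh : ‖s • h‖ = s := by rw [norm_smul, hh, mul_one, Real.norm_of_nonneg hs.le]
    have hmem : v + s • h ∈ almostSubgradientSet P x ε := hball (by simp [hsh])
    have hsub := hmem (s • h)
    rw [add_sub_cancel_right, hsh, map_smul, smul_eq_mul] at hsub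
    have hle := le_supportFunction hP i (v + s • h)
    rw [map_add, map_smul, smul_eq_mul] at hle
    refine le_of_mul_le_mul_left ?_ hs
    rw [sub_apply]
    linarith
  refine ContinuousLinearMap.opNorm_le_of_unit_norm (by positivity) fun h hh ↦ abs_le.2 ⟨?_, ?_⟩
  · have := hunit (-h) ((norm_neg h).trans hh)
    rw [map_neg] at this
    linarith
  · exact hunit h hh

/- By Baire's theorem one member of a dense sequence in the dual is an almost-subgradient of the
support function on a whole ball of centre `v`, which makes a slice in direction `v` small. -/
theorem exists_small_slice [CompleteSpace V] [TopologicalSpace.SeparableSpace (V →L[ℝ] ℝ)]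
    [Nonempty ι] (hP : ∀ i, ‖P i‖ ≤ C) {ε : ℝ} (hε : 0 < ε) :
    ∃ (v : V) (η : ℝ) (x : V →L[ℝ] ℝ), 0 < η ∧
      ∀ i, supportFunction P v - η < P i v → ‖P i - x‖ ≤ ε := by
  let x := TopologicalSpace.denseSeq (V →L[ℝ] ℝ)
  have hcover : ⋃ n, almostSubgradientSet P (x n) (ε / 2) = Set.univ := by
    refine Set.eq_univ_of_forall fun v ↦ Set.mem_iUnion.2 ?_
    obtain ⟨φ, hv, hφ⟩ := exists_subgradient_supportFunction hP v
    obtain ⟨n, hn⟩ := (TopologicalSpace.denseRange_denseSeq _).exists_dist_lt φ (half_pos hε)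
    exact ⟨n, mem_almostSubgradientSet_of_norm_sub_le hv hφ (dist_eq_norm φ (x n) ▸ hn.le)⟩
  obtain ⟨n, v, hv⟩ := nonempty_interior_of_iUnion_of_closed
    (fun n ↦ isClosed_almostSubgradientSet hP (x n) (ε / 2)) hcover
  obtain ⟨s, hs, hball⟩ := Metric.nhds_basis_closedBall.mem_iff.1 (mem_interior_iff_mem_nhds.1 hv)
  refine ⟨v, s * (ε / 2), x n, by positivity, fun i hi ↦ ?_⟩
  have := norm_sub_le_of_mem_slice hP (half_pos hε).le hs hball hi
  linarith

end SmallSlices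

section AsymptoticInvariance

variable {X : Type*}

/- Expand `0 ≤ m ((b f - ∑ a_j Y_j)²)`, where `a_j = m (f Y_j)` and `b` bounds all `m (Y_j²)`. -/
theorem Mean.sum_sq_le_of_orthogonal {ι : Type*} (m : Mean X) {Y : ι → X → ℝ} {B : ℝ}
    (hY : ∀ j x, |Y j x| ≤ B) (horth : Pairwise fun i j ↦ m (fun x ↦ Y i x * Y j x) = 0)
    {f : X → ℝ} (hf : f ∈ boundedFunctions X) (s : Finset ι) :
    ∑ j ∈ s, m (fun x ↦ f x * Y j x) ^ 2 ≤ (B ^ 2 + 1) * m (fun x ↦ f x * f x) := by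
  have hYb (j : ι) : Y j ∈ boundedFunctions X := ⟨B, hY j⟩
  set b : ℝ := B ^ 2 + 1
  set a : ι → ℝ := fun j ↦ m fun x ↦ f x * Y j x
  set g : X → ℝ := fun x ↦ ∑ j ∈ s, a j * Y j x with hg
  have hgb : g ∈ boundedFunctions X := by
    have : g = ∑ j ∈ s, a j • Y j := by ext; simp [hg]
    exact this ▸ sum_mem fun j _ ↦ Subalgebra.smul_mem _ (hYb j) _
  have hfg : m (fun x ↦ f x * g x) = ∑ j ∈ s, a j ^ 2 := by
    simp only [hg, Finset.mul_sum, mul_left_comm (f _), map_fun_sum, map_fun_const_mul, sq, a]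
  have hgg : m (fun x ↦ g x * g x) ≤ b * ∑ j ∈ s, a j ^ 2 := by
    have hprod (i j : ι) (x : X) : a i * Y i x * (a j * Y j x) = a i * a j * (Y i x * Y j x) :=
      mul_mul_mul_comm _ _ _ _
    simp only [hg, Finset.sum_mul_sum, hprod, map_fun_sum, map_fun_const_mul]
    rw [Finset.mul_sum]
    refine Finset.sum_le_sum fun i hi ↦ ?_
    rw [Finset.sum_eq_single_of_mem i hi fun j _ hji ↦ by rw [horth hji.symm, mul_zero], mul_comm,
      ← sq (a i)]
    refine mul_le_mul_of_nonneg_right (le_of_abs_le (m.abs_le fun x ↦ ?_)) (sq_nonneg _)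
    rw [← sq, abs_of_nonneg (sq_nonneg _), ← sq_abs]
    exact (pow_le_pow_left₀ (abs_nonneg _) (hY i x) 2).trans (lt_add_one _).le
  have hpos : 0 ≤ m fun x ↦ b ^ 2 * (f x * f x) - 2 * b * (f x * g x) + g x * g x := by
    refine m.nonneg ?_ fun x ↦ ?_
    · exact add_mem (sub_mem (Subalgebra.smul_mem _ (mul_mem hf hf) _)
        (Subalgebra.smul_mem _ (mul_mem hf hgb) _)) (mul_mem hgb hgb)
    · linarith [sq_nonneg (b * f x - g x)]
  rw [map_fun_add, map_fun_sub, map_fun_const_mul, map_fun_const_mul, hfg] at hpos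
  have hb : 0 < b := by positivity
  refine le_of_mul_le_mul_left ?_ hb
  linarith

theorem Mean.tendsto_zero_of_orthogonal (m : Mean X) {Y : ℕ → X → ℝ} {B : ℝ}
    (hY : ∀ j x, |Y j x| ≤ B) (horth : Pairwise fun i j ↦ m (fun x ↦ Y i x * Y j x) = 0)
    {f : X → ℝ} (hf : f ∈ boundedFunctions X) :
    Tendsto (fun j ↦ m fun x ↦ f x * Y j x) atTop (𝓝 0) := by
  have hsum := summable_of_sum_le (fun j ↦ sq_nonneg (m fun x ↦ f x * Y j x))
    (m.sum_sq_le_of_orthogonal hY horth hf)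
  rw [tendsto_zero_iff_abs_tendsto_zero]
  simpa only [comp_def, Real.sqrt_sq_eq_abs, Real.sqrt_zero] using
    hsum.tendsto_atTop_zero.sqrt

variable {Ω : Type*} [Group Ω] {m : Mean Ω}

/-- `D` is a Radon–Nikodym density with respect to `m` of the translate of `m` by `c`. -/
structure IsDensity (m : Mean Ω) (c : Ω) (D : Ω → ℝ) : Prop where
  bounded : D ∈ boundedFunctions Ω
  apply_mul_left : ∀ f ∈ boundedFunctions Ω, m (fun x ↦ f (c * x)) = m fun x ↦ f x * D x

/-- The translates of `m` by the sequence `y` converge weakly to `m`. -/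
def AsymptoticallyInvariant (m : Mean Ω) (y : ℕ → Ω) : Prop :=
  ∀ f ∈ boundedFunctions Ω, Tendsto (fun j ↦ m fun x ↦ f (y j * x)) atTop (𝓝 (m f))

theorem IsDensity.apply_eq_one {c : Ω} {D : Ω → ℝ} (h : IsDensity m c D) : m D = 1 := by
  have := h.apply_mul_left _ (one_mem _)
  simp only [Pi.one_apply, one_mul, m.map_fun_const] at this
  exact this.symm

theorem asymptoticallyInvariant_of_isDensity {y : ℕ → Ω} {D : ℕ → Ω → ℝ} {B : ℝ}
    (hD : ∀ j, IsDensity m (y j) (D j)) (hB : ∀ j x, |D j x| ≤ B)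
    (hinv : Pairwise fun i j ↦ ∀ x, D j (y i * x) = D j x) : AsymptoticallyInvariant m y := by
  intro f hf
  have horth : Pairwise fun i j ↦ m (fun x ↦ (D i x - 1) * (D j x - 1)) = 0 := by
    intro i j hij
    have hmul : m (fun x ↦ D i x * D j x) = 1 := by
      simp only [mul_comm (D i _), ← (hD i).apply_mul_left (D j) (hD j).bounded, hinv hij]
      exact (hD j).apply_eq_one
    have hexp : (fun x ↦ (D i x - 1) * (D j x - 1)) =
        fun x ↦ D i x * D j x - D i x - (D j x - 1) := by
      ext x
      ring
    rw [hexp, m.map_fun_sub, m.map_fun_sub, m.map_fun_sub, hmul, (hD i).apply_eq_one,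
      (hD j).apply_eq_one, m.map_fun_const, sub_self]
  have hbound : ∀ j x, |D j x - 1| ≤ B + 1 := fun j x ↦
    (abs_sub _ _).trans (add_le_add (hB j x) abs_one.le)
  have hlim := m.tendsto_zero_of_orthogonal hbound horth hf
  simp only [mul_sub, mul_one, m.map_fun_sub] at hlim
  simp only [(hD _).apply_mul_left f hf]
  exact tendsto_sub_nhds_zero_iff.1 hlim

end AsymptoticInvariance

section Constancy

variable {K Ω V : Type*} [Group K] [Group Ω] [NormedAddCommGroup V] [NormedSpace ℝ V]
  {i : K →* Ω} {m : Mean Ω} {Φ : V → Ω → ℝ} {Ψ : K → V →L[ℝ] ℝ} {C : ℝ}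

theorem AsymptoticallyInvariant.tendsto_apply_mul {y : ℕ → K}
    (hy : AsymptoticallyInvariant m fun j ↦ i (y j)) (hΦ : ∀ v, Φ v ∈ boundedFunctions Ω)
    (hΨ : ∀ x v, Ψ x v = m fun ω ↦ Φ v (i x * ω)) (x : K) (v : V) :
    Tendsto (fun j ↦ Ψ (x * y j) v) atTop (𝓝 (Ψ x v)) := by
  simp only [hΨ, map_mul, mul_assoc]
  exact hy _ (comp_mem_boundedFunctions (hΦ v) (i x * ·))

/- Choose `x₀` with `Ψ x₀` in a small slice. The slice contains `Ψ (x₀ * α j x)` for large `j`, so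
`Ψ (x₀ * α j x)` is close to `Ψ x₀`; translating back by `(α j)⁻¹` and letting `j` tend to infinity,
`Ψ x` is close to `Ψ 1`. -/
theorem apply_eq_apply_one_of_asymptoticallyInvariant [CompleteSpace V]
    [TopologicalSpace.SeparableSpace (V →L[ℝ] ℝ)] (hΦ : ∀ v, Φ v ∈ boundedFunctions Ω)
    (hΨ : ∀ x v, Ψ x v = m fun ω ↦ Φ v (i x * ω)) (hC : ∀ x, ‖Ψ x‖ ≤ C)
    (h : ∀ x x₀ : K, ∃ (α : ℕ → MulAut K) (T : ℕ → V ≃ₗᵢ[ℝ] V),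
      (∀ j y v, Ψ (α j y) (T j v) = Ψ y v) ∧ (∀ j, Commute (α j x) x₀) ∧
      AsymptoticallyInvariant m (fun j ↦ i (α j x)) ∧
      AsymptoticallyInvariant m (fun j ↦ i ((α j)⁻¹ x₀))) (x : K) :
    Ψ x = Ψ 1 := by
  rw [← sub_eq_zero, ← norm_le_zero_iff]
  refine le_of_forall_pos_le_add fun ε hε ↦ ?_
  obtain ⟨v, η, φ, hη, hslice⟩ := exists_small_slice hC (half_pos hε)
  obtain ⟨x₀, hx₀⟩ := exists_lt_supportFunction (P := Ψ) v hη
  obtain ⟨α, T, hT, hcomm, hx, hαx₀⟩ := h x x₀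
  have hclose : ∀ᶠ j in atTop, ‖Ψ (x₀ * α j x) - Ψ x₀‖ ≤ ε := by
    filter_upwards [(hx.tendsto_apply_mul hΦ hΨ x₀ v).eventually_const_lt hx₀] with j hj
    refine (norm_sub_le_norm_sub_add_norm_sub _ φ _).trans ?_
    rw [norm_sub_rev φ, ← add_halves ε]
    exact add_le_add (hslice _ hj) (hslice _ hx₀)
  have hback : ∀ᶠ j in atTop, ∀ w, |Ψ (x * (α j)⁻¹ x₀) w - Ψ (1 * (α j)⁻¹ x₀) w| ≤ ε * ‖w‖ := by
    filter_upwards [hclose] with j hj w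
    have := (Ψ (x₀ * α j x) - Ψ x₀).le_of_opNorm_le hj (T j w)
    rw [(T j).norm_map] at this
    rwa [← hT j, ← hT j _ w, map_mul, MulAut.apply_inv_self, (hcomm j).eq, one_mul,
      MulAut.apply_inv_self]
  rw [zero_add]
  refine (Ψ x - Ψ 1).opNorm_le_bound hε.le fun w ↦ ?_
  exact le_of_tendsto ((hαx₀.tendsto_apply_mul hΦ hΨ x w).sub
    (hαx₀.tendsto_apply_mul hΦ hΨ 1 w)).abs (hback.mono fun j hj ↦ hj w)

end Constancy

section QuasiInvariantMeans

variable {Γ : Type*} [Group Γ]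

/-- Convolution of weights on a discrete group. -/
noncomputable def weightConv (μ p : Γ → ℝ≥0∞) (g : Γ) : ℝ≥0∞ :=
  ∑' c, μ c * p (c⁻¹ * g)

theorem tsum_weightConv (μ p : Γ → ℝ≥0∞) : ∑' g, weightConv μ p g = (∑' c, μ c) * ∑' g, p g := by
  simp only [weightConv]
  rw [ENNReal.tsum_comm, ← ENNReal.tsum_mul_right]
  refine tsum_congr fun c ↦ ?_
  rw [ENNReal.tsum_mul_left]
  congr 1
  exact (Equiv.mulLeft c⁻¹).tsum_eq p

/- For a strictly positive `μ` of total mass less than `1/2`, the sum `p` of all convolution powers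
of `μ` satisfies `μ * p ≤ p`, hence `μ c * p (c⁻¹ * g) ≤ p g`. -/
theorem exists_superharmonic_weight (Γ : Type*) [Group Γ] [Countable Γ] :
    ∃ p : Γ → ℝ≥0∞, (∀ g, p g ≠ 0) ∧ ∑' g, p g ≠ ∞ ∧
      ∀ c, ∃ K ≠ ∞, ∀ g, p (c⁻¹ * g) ≤ K * p g := by
  obtain ⟨μ, hμ, hsum⟩ := ENNReal.exists_pos_sum_of_countable (ε := 2⁻¹) (by simp) Γ
  have hμ0 (c : Γ) : (μ c : ℝ≥0∞) ≠ 0 := ENNReal.coe_ne_zero.2 (hμ c).ne'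
  set T : (Γ → ℝ≥0∞) → Γ → ℝ≥0∞ := weightConv fun c ↦ μ c with hT
  set p : Γ → ℝ≥0∞ := fun g ↦ ∑' n, T^[n] (fun c ↦ μ c) g with hp
  have hμp (g : Γ) : μ g ≤ p g := ENNReal.le_tsum (f := fun n ↦ T^[n] (fun c ↦ μ c) g) 0
  have hTp (g : Γ) : T p g ≤ p g := by
    calc T p g = ∑' n, T^[n + 1] (fun c ↦ μ c) g := by
          simp only [hT, weightConv, hp, iterate_succ_apply', ← ENNReal.tsum_mul_left]
          exact ENNReal.tsum_comm
      _ ≤ p g := ENNReal.tsum_comp_le_tsum_of_injective (add_left_injective 1) _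
  have hmass (n : ℕ) : ∑' g, T^[n] (fun c ↦ μ c) g ≤ 2⁻¹ ^ n := by
    induction n with
    | zero => simpa using hsum.le.trans (by norm_num)
    | succ n ih =>
      rw [iterate_succ_apply', tsum_weightConv, pow_succ']
      exact mul_le_mul' hsum.le ih
  refine ⟨p, fun g h ↦ hμ0 g (le_zero_iff.1 (h ▸ hμp g)), ?_, fun c ↦
    ⟨(μ c : ℝ≥0∞)⁻¹, ENNReal.inv_ne_top.2 (hμ0 c), fun g ↦ ?_⟩⟩
  · rw [ENNReal.tsum_comm]
    refine ne_top_of_le_ne_top ?_ (ENNReal.tsum_le_tsum hmass)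
    simp [ENNReal.tsum_geometric]
  · rw [← ENNReal.mul_le_iff_le_inv (hμ0 c) ENNReal.coe_ne_top]
    exact (ENNReal.le_tsum c).trans (hTp g)

theorem exists_quasiInvariant_weight (Γ : Type*) [Group Γ] [Countable Γ] :
    ∃ p : Γ → ℝ, (∀ g, 0 < p g) ∧ HasSum p 1 ∧ ∀ c, ∃ K, ∀ g, p (c⁻¹ * g) ≤ K * p g := by
  obtain ⟨q, hq0, hqsum, hqK⟩ := exists_superharmonic_weight Γ
  have hpos (g : Γ) : 0 < (q g).toReal :=
    ENNReal.toReal_pos (hq0 g) (ENNReal.ne_top_of_tsum_ne_top hqsum g)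
  have hsum : Summable fun g ↦ (q g).toReal := ENNReal.summable_toReal hqsum
  have hmass : 0 < ∑' g, (q g).toReal := hsum.tsum_pos (fun g ↦ (hpos g).le) 1 (hpos 1)
  refine ⟨fun g ↦ (q g).toReal / ∑' h, (q h).toReal, fun g ↦ div_pos (hpos g) hmass, ?_,
    fun c ↦ ?_⟩
  · simpa [hmass.ne'] using hsum.hasSum.div_const (∑' h, (q h).toReal)
  · obtain ⟨K, hK, hle⟩ := hqK c
    refine ⟨K.toReal, fun g ↦ ?_⟩
    rw [← mul_div_assoc, ← ENNReal.toReal_mul]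
    exact div_le_div_of_nonneg_right (ENNReal.toReal_mono
      (ENNReal.mul_ne_top hK (ENNReal.ne_top_of_tsum_ne_top hqsum g)) (hle g)) hmass.le

theorem isDensity_one (m : Mean Γ) : IsDensity m 1 1 :=
  ⟨one_mem _, fun f _ ↦ by simp⟩

theorem exists_quasiInvariant_mean (Γ : Type*) [Group Γ] [Countable Γ] :
    ∃ m : Mean Γ, ∀ c, ∃ D, IsDensity m c D := by
  obtain ⟨p, hpos, hsum, hK⟩ := exists_quasiInvariant_weight Γ
  obtain ⟨m, hm⟩ := Mean.exists_eq_tsum (fun g ↦ (hpos g).le) hsum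
  refine ⟨m, fun c ↦ ⟨fun g ↦ p (c⁻¹ * g) / p g, ?_⟩⟩
  have hbdd : (fun g ↦ p (c⁻¹ * g) / p g) ∈ boundedFunctions Γ := by
    obtain ⟨K, hK⟩ := hK c
    refine ⟨K, fun g ↦ ?_⟩
    rw [abs_of_nonneg (div_pos (hpos _) (hpos g)).le]
    exact (div_le_iff₀ (hpos g)).2 (hK g)
  refine ⟨hbdd, fun f hf ↦ ?_⟩
  rw [hm _ (comp_mem_boundedFunctions hf (c * ·)), ← (Equiv.mulLeft c⁻¹).tsum_eq]
  refine Eq.trans ?_ (hm _ (mul_mem hf hbdd)).symm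
  refine tsum_congr fun g ↦ ?_
  have := (hpos g).ne'
  simp only [Equiv.coe_mulLeft, mul_inv_cancel_left, Pi.mul_apply]
  field_simp

variable {m : Mean Γ}

theorem IsDensity.map {Ω : Type*} [Group Ω] (e : Γ →* Ω) {c : Γ} {D : Ω → ℝ}
    (hD : D ∈ boundedFunctions Ω) (h : IsDensity m c fun x ↦ D (e x)) :
    IsDensity (m.map e) (e c) D where
  bounded := hD
  apply_mul_left f hf := by
    simpa only [Mean.map_apply, map_mul] using
      h.apply_mul_left _ (comp_mem_boundedFunctions hf e)

theorem IsDensity.of_tendsto {ι : Type*} {l : Filter ι} [l.NeBot] {k : ι → Mean Γ}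
    (hm : ∀ f ∈ boundedFunctions Γ, Tendsto (fun i ↦ k i f) l (𝓝 (m f))) {c : Γ} {D : Γ → ℝ}
    (h : ∀ᶠ i in l, IsDensity (k i) c D) : IsDensity m c D := by
  obtain ⟨i, hi⟩ := h.exists
  refine ⟨hi.bounded, fun f hf ↦ tendsto_nhds_unique_of_eventuallyEq
    (hm _ (comp_mem_boundedFunctions hf (c * ·))) (hm _ (mul_mem hf hi.bounded)) ?_⟩
  exact h.mono fun j hj ↦ hj.apply_mul_left f hf

/-- The `n`-fold power of a mean, integrating the first coordinate last. -/
def Mean.piFin {X : Type*} (m : Mean X) : ∀ n, Mean (Fin n → X)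
  | 0 => Mean.dirac Fin.elim0
  | n + 1 => m.bind fun x ↦ (m.piFin n).map (Fin.cons x)

theorem prod_mem_boundedFunctions {ι X : Type*} [Fintype ι] {D : ι → X → ℝ}
    (hD : ∀ i, D i ∈ boundedFunctions X) :
    (fun z : ι → X ↦ ∏ i, D i (z i)) ∈ boundedFunctions (ι → X) := by
  choose B hB using hD
  exact ⟨∏ i, B i, fun z ↦ (Finset.abs_prod _ _).trans_le
    (Finset.prod_le_prod (fun _ _ ↦ abs_nonneg _) fun i _ ↦ hB i (z i))⟩

theorem IsDensity.piFin {n : ℕ} {c : Fin n → Γ} {D : Fin n → Γ → ℝ}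
    (h : ∀ i, IsDensity m (c i) (D i)) :
    IsDensity (m.piFin n) c fun z ↦ ∏ i, D i (z i) := by
  induction n with
  | zero =>
    rw [Subsingleton.elim c 1]
    simpa only [Finset.univ_eq_empty, Finset.prod_empty, Pi.one_def] using isDensity_one (m.piFin 0)
  | succ n ih =>
    have htail := ih fun i ↦ h i.succ
    refine ⟨prod_mem_boundedFunctions fun i ↦ (h i).bounded, fun f hf ↦ ?_⟩
    have hcons (x : Γ) (z : Fin n → Γ) :
        c * (Fin.cons x z : Fin (n + 1) → Γ) = Fin.cons (c 0 * x) ((fun i ↦ c i.succ) * z) := by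
      ext i
      cases i using Fin.cases <;> simp
    have hf' (x : Γ) : (fun z ↦ f (Fin.cons x z)) ∈ boundedFunctions (Fin n → Γ) :=
      comp_mem_boundedFunctions hf _
    simp only [Mean.piFin, Mean.bind_apply, Mean.map_apply, hcons,
      fun x ↦ htail.apply_mul_left _ (hf' x), Fin.prod_univ_succ, Fin.cons_zero, Fin.cons_succ,
      mul_left_comm (f _), Mean.map_fun_const_mul]
    rw [(h 0).apply_mul_left
      (fun x ↦ m.piFin n fun z ↦ f (Fin.cons x z) * ∏ i : Fin n, D i.succ (z i))]
    · simp only [mul_comm]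
    · exact Mean.apply_mem_boundedFunctions (fun x ↦ (m.piFin n).map (Fin.cons x)) (mul_mem hf
        (comp_mem_boundedFunctions (prod_mem_boundedFunctions fun i ↦ (h i.succ).bounded) Fin.tail))

end QuasiInvariantMeans

section RestrictedProduct

variable {ι Γ : Type*} [Group Γ]

theorem finite_mulSupport_finSupp (b : finSupp ι Γ) : (mulSupport (b : ι → Γ)).Finite :=
  b.2

/-- Extension by `1` along an injection from a finite set, with values in the restricted
product. -/
noncomputable def extendHom {n : ℕ} (s : Fin n ↪ ι) : (Fin n → Γ) →* finSupp ι Γ :=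
  (ExtendByOne.hom Γ s).codRestrict _ fun z ↦ (Set.finite_range s).subset fun i hi ↦ by
    by_contra h
    exact hi (extend_apply' z (1 : ι → Γ) i h)

theorem extendHom_apply {n : ℕ} (s : Fin n ↪ ι) (z : Fin n → Γ) (k : Fin n) :
    (extendHom s z : ι → Γ) (s k) = z k :=
  s.injective.extend_apply z (1 : ι → Γ) k

theorem extendHom_comp_eq {n : ℕ} (s : Fin n ↪ ι) {b : finSupp ι Γ}
    (hb : mulSupport (b : ι → Γ) ⊆ Set.range s) :
    extendHom s (fun k ↦ (b : ι → Γ) (s k)) = b := by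
  ext i
  by_cases h : ∃ k, s k = i
  · obtain ⟨k, rfl⟩ := h
    exact extendHom_apply s _ k
  · rw [notMem_mulSupport.1 fun hi ↦ h (hb hi)]
    exact extend_apply' (fun k ↦ (b : ι → Γ) (s k)) (1 : ι → Γ) i h

variable {d : Γ → Γ → ℝ}

theorem mulSupport_density_subset (hd : ∀ g, d 1 g = 1) (b : finSupp ι Γ) (z : ι → Γ) :
    (mulSupport fun i ↦ d ((b : ι → Γ) i) (z i)) ⊆ mulSupport (b : ι → Γ) := by
  intro i hi hb
  exact hi (by simp only [hb, hd])

theorem finprod_density_mem_boundedFunctions (hd : ∀ g, d 1 g = 1)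
    (hdb : ∀ c, d c ∈ boundedFunctions Γ) (b : finSupp ι Γ) :
    (fun z : finSupp ι Γ ↦ ∏ᶠ i, d ((b : ι → Γ) i) ((z : ι → Γ) i)) ∈
      boundedFunctions (finSupp ι Γ) := by
  have hprod (z : finSupp ι Γ) : ∏ᶠ i, d ((b : ι → Γ) i) ((z : ι → Γ) i) =
      ∏ i ∈ (finite_mulSupport_finSupp b).toFinset, d ((b : ι → Γ) i) ((z : ι → Γ) i) :=
    finprod_eq_prod_of_mulSupport_subset _ (by
      simpa only [Set.Finite.coe_toFinset] using mulSupport_density_subset hd b z)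
  simp only [hprod, ← Finset.prod_fn]
  exact prod_mem fun i _ ↦ comp_mem_boundedFunctions (hdb _) fun z : finSupp ι Γ ↦ (z : ι → Γ) i

theorem finprod_density_extendHom (hd : ∀ g, d 1 g = 1) {n : ℕ} (s : Fin n ↪ ι) {b : finSupp ι Γ}
    (hb : mulSupport (b : ι → Γ) ⊆ Set.range s) (z : Fin n → Γ) :
    ∏ᶠ i, d ((b : ι → Γ) i) ((extendHom s z : ι → Γ) i) = ∏ k, d ((b : ι → Γ) (s k)) (z k) := by
  rw [finprod_eq_prod_of_mulSupport_subset (s := Finset.univ.map s) _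
    ((mulSupport_density_subset hd b _).trans (by simpa using hb)), Finset.prod_map]
  simp only [extendHom_apply]

/- The product mean is an ultralimit of finite products of `m`, extended by `1`, along the directed
set of finite subsets of `ι`. -/
theorem exists_mean_finSupp {m : Mean Γ} (hd : ∀ g, d 1 g = 1) (hm : ∀ c, IsDensity m c (d c))
    (ι : Type*) :
    ∃ β : Mean (finSupp ι Γ), ∀ b : finSupp ι Γ,
      IsDensity β b fun z ↦ ∏ᶠ i, d ((b : ι → Γ) i) ((z : ι → Γ) i) := by
  let s (J : Finset ι) : Fin J.card ↪ ι := J.equivFin.symm.toEmbedding.trans (.subtype _)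
  have hs (J : Finset ι) : Set.range (s J) = J := by
    exact (EquivLike.range_comp Subtype.val J.equivFin.symm).trans Subtype.range_coe
  obtain ⟨β, hβ⟩ := Mean.exists_ultralimit (Ultrafilter.of (atTop : Filter (Finset ι)))
    fun J ↦ (m.piFin J.card).map (extendHom (s J))
  refine ⟨β, fun b ↦ IsDensity.of_tendsto hβ ?_⟩
  refine Ultrafilter.of_le atTop
    ((eventually_ge_atTop (finite_mulSupport_finSupp b).toFinset).mono fun J hJ ↦ ?_)
  have hsupp : mulSupport (b : ι → Γ) ⊆ Set.range (s J) := by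
    rw [hs]
    exact Set.Finite.toFinset_subset.1 hJ
  have hdens := (IsDensity.piFin fun k ↦ hm ((b : ι → Γ) (s J k)))
  simp only [← finprod_density_extendHom hd (s J) hsupp] at hdens
  simpa only [extendHom_comp_eq (s J) hsupp] using IsDensity.map (extendHom (s J))
    (finprod_density_mem_boundedFunctions hd (fun c ↦ (hm c).bounded) b) hdens

end RestrictedProduct

section Semidirect

variable {N H : Type*} [Group N] [Group H] {φ : H →* MulAut N} {μ : Mean H} {β : Mean N}

/-- The law of `h * z`, where `h` has law `μ` and, independently, `z` has law `β`. -/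
def Mean.semidirect (φ : H →* MulAut N) (μ : Mean H) (β : Mean N) : Mean (N ⋊[φ] H) :=
  μ.bind fun h ↦ β.map fun z ↦ .inr h * .inl z

theorem Mean.semidirect_inr_mul (hμ : ∀ k, ∀ f ∈ boundedFunctions H, μ (fun h ↦ f (k * h)) = μ f)
    (k : H) {f : N ⋊[φ] H → ℝ} (hf : f ∈ boundedFunctions (N ⋊[φ] H)) :
    Mean.semidirect φ μ β (fun w ↦ f (.inr k * w)) = Mean.semidirect φ μ β f := by
  simp only [semidirect, bind_apply, map_apply, ← mul_assoc, ← map_mul]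
  exact hμ k _ (apply_mem_boundedFunctions
    (fun h ↦ β.map fun z ↦ (.inr h * .inl z : N ⋊[φ] H)) hf)

theorem isDensity_semidirect_inl {b : N} {D : N → ℝ} (hD : D ∈ boundedFunctions N)
    (h : ∀ k, IsDensity β (φ k⁻¹ b) fun z ↦ D (φ k z)) :
    IsDensity (Mean.semidirect φ μ β) (.inl b) fun w ↦ D w.left where
  bounded := comp_mem_boundedFunctions hD _
  apply_mul_left f hf := by
    have hcomm (k : H) (z : N) :
        (.inl b * (.inr k * .inl z) : N ⋊[φ] H) = .inr k * .inl (φ k⁻¹ b * z) := by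
      ext <;> simp
    simp only [Mean.semidirect, Mean.bind_apply, Mean.map_apply, hcomm, SemidirectProduct.mul_left,
      SemidirectProduct.left_inr, SemidirectProduct.right_inr, SemidirectProduct.left_inl, one_mul]
    congr 1
    ext k
    exact (h k).apply_mul_left _ (comp_mem_boundedFunctions hf fun z ↦ .inr k * .inl z)

end Semidirect

section Shifts

variable {ι Γ : Type*} [Group Γ]

theorem commute_of_disjoint_mulSupport {a b : finSupp ι Γ}
    (h : Disjoint (mulSupport (a : ι → Γ)) (mulSupport (b : ι → Γ))) : Commute a b := by
  ext i
  by_cases ha : (a : ι → Γ) i = 1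
  · simp [ha]
  · simp [notMem_mulSupport.1 (Set.disjoint_left.1 h ha)]

theorem disjoint_mulSupport_shiftHom {k l : Multiplicative ℤ} {a b : finSupp ℤ Γ}
    (h : Disjoint (mulSupport (shiftHom Γ (l⁻¹ * k) a : ℤ → Γ)) (mulSupport (b : ℤ → Γ))) :
    Disjoint (mulSupport (shiftHom Γ k a : ℤ → Γ)) (mulSupport (shiftHom Γ l b : ℤ → Γ)) := by
  rw [← mul_inv_cancel_left l k, map_mul]
  exact h.preimage _

theorem finite_setOf_not_disjoint_shiftHom (a b : finSupp ℤ Γ) :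
    {k | ¬Disjoint (mulSupport (shiftHom Γ k a : ℤ → Γ)) (mulSupport (b : ℤ → Γ))}.Finite := by
  refine ((finite_mulSupport_finSupp b).image2 (fun i j ↦ Multiplicative.ofAdd (i - j))
    (finite_mulSupport_finSupp a)).subset fun k hk ↦ ?_
  obtain ⟨i, hia, hib⟩ := Set.not_disjoint_iff.1 hk
  exact ⟨i, hib, i - k.toAdd, hia, by simp⟩

theorem exists_seq_notMem_of_finite {S : Set (Multiplicative ℤ)} (hS : S.Finite) :
    ∃ t : ℕ → Multiplicative ℤ, (∀ j, t j ∉ S) ∧ Pairwise fun i j ↦ (t i)⁻¹ * t j ∉ S := by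
  obtain ⟨R, hR⟩ := (hS.image fun k ↦ |k.toAdd|).bddAbove
  have hlt : ∀ {m : ℤ}, m ≠ 0 → Multiplicative.ofAdd ((|R| + 1) * m) ∉ S := by
    intro m hm hmem
    have hle := hR (Set.mem_image_of_mem _ hmem)
    rw [toAdd_ofAdd, abs_mul, abs_of_pos (by positivity)] at hle
    nlinarith [le_abs_self R, abs_nonneg R, Int.one_le_abs hm]
  refine ⟨fun j ↦ .ofAdd ((|R| + 1) * (j + 1 : ℤ)), fun j ↦ hlt (by omega), fun i j hij ↦ ?_⟩
  change Multiplicative.ofAdd (-((|R| + 1) * (i + 1 : ℤ)) + (|R| + 1) * (j + 1 : ℤ)) ∉ S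
  rw [← mul_neg, ← mul_add]
  exact hlt (by omega)

theorem exists_separating_shifts {n : ℕ} (x x₀ : Fin n → finSupp ℤ Γ) :
    ∃ t : ℕ → Multiplicative ℤ,
      (∀ j l, Disjoint (mulSupport (shiftHom Γ (t j) (x l) : ℤ → Γ))
        (mulSupport (x₀ l : ℤ → Γ))) ∧
      (Pairwise fun i j ↦ ∀ l, Disjoint (mulSupport (shiftHom Γ (t i) (x l) : ℤ → Γ))
        (mulSupport (shiftHom Γ (t j) (x l) : ℤ → Γ))) ∧
      (Pairwise fun i j ↦ ∀ l, Disjoint (mulSupport (shiftHom Γ (t i)⁻¹ (x₀ l) : ℤ → Γ))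
        (mulSupport (shiftHom Γ (t j)⁻¹ (x₀ l) : ℤ → Γ))) := by
  let bad (a b : Fin n → finSupp ℤ Γ) : Set (Multiplicative ℤ) :=
    ⋃ l, {k | ¬Disjoint (mulSupport (shiftHom Γ k (a l) : ℤ → Γ)) (mulSupport (b l : ℤ → Γ))}
  have hbad (a b : Fin n → finSupp ℤ Γ) : (bad a b).Finite :=
    Set.finite_iUnion fun l ↦ finite_setOf_not_disjoint_shiftHom (a l) (b l)
  have hdisj {a b : Fin n → finSupp ℤ Γ} {k : Multiplicative ℤ} (hk : k ∉ bad a b) (l : Fin n) :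
      Disjoint (mulSupport (shiftHom Γ k (a l) : ℤ → Γ)) (mulSupport (b l : ℤ → Γ)) :=
    not_not.1 fun h ↦ hk (Set.mem_iUnion.2 ⟨l, h⟩)
  obtain ⟨t, ht, htt⟩ :=
    exists_seq_notMem_of_finite (((hbad x x₀).union (hbad x x)).union (hbad x₀ x₀))
  refine ⟨t, fun j ↦ hdisj fun h ↦ ht j (.inl (.inl h)), fun i j hij l ↦ ?_, fun i j hij l ↦ ?_⟩
  · exact disjoint_mulSupport_shiftHom (hdisj (fun h ↦ htt hij.symm (.inl (.inr h))) l)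
  · refine disjoint_mulSupport_shiftHom (hdisj (fun h ↦ htt hij (.inr ?_)) l)
    rwa [inv_inv, mul_comm] at h

end Shifts

section WreathMean

variable {Γ : Type*} [Group Γ]

/-- `κ` is a mean on `Γ ≀ ℤ` that is invariant under the translations by `ℤ`, and whose translate
by `b ∈ ⨁_ℤ Γ` has a density `D b` depending only on the base coordinate. The densities are
compatible with shifts, and `D b` is insensitive to translations by elements whose support is
disjoint from that of `b`. -/
structure IsLampMean (κ : Mean (WreathZ Γ)) (D : finSupp ℤ Γ → finSupp ℤ Γ → ℝ) : Prop where
  inr_mul : ∀ k, ∀ f ∈ boundedFunctions (WreathZ Γ), κ (fun w ↦ f (.inr k * w)) = κ f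
  isDensity_inl : ∀ b, IsDensity κ (.inl b) fun w ↦ D b w.left
  shift : ∀ k b z, D (shiftHom Γ k b) (shiftHom Γ k z) = D b z
  mul_left : ∀ a b : finSupp ℤ Γ, Disjoint (mulSupport (a : ℤ → Γ)) (mulSupport (b : ℤ → Γ)) →
    ∀ z, D b (a * z) = D b z

theorem exists_isLampMean (Γ : Type*) [Group Γ] [Countable Γ] :
    ∃ (κ : Mean (WreathZ Γ)) (D : finSupp ℤ Γ → finSupp ℤ Γ → ℝ), IsLampMean κ D := by
  obtain ⟨m, hm⟩ := exists_quasiInvariant_mean Γ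
  obtain ⟨d, hd, hmd⟩ : ∃ d : Γ → Γ → ℝ, (∀ g, d 1 g = 1) ∧ ∀ c, IsDensity m c (d c) := by
    choose d hd using hm
    classical
    refine ⟨update d 1 1, fun g ↦ by simp, fun c ↦ ?_⟩
    obtain rfl | hc := eq_or_ne c 1
    · simpa using isDensity_one m
    · simpa [hc] using hd c
  obtain ⟨β, hβ⟩ := exists_mean_finSupp hd hmd ℤ
  obtain ⟨μ, hμ⟩ := Mean.exists_invariant_multiplicative_int
  let D (b z : finSupp ℤ Γ) : ℝ := ∏ᶠ i, d ((b : ℤ → Γ) i) ((z : ℤ → Γ) i)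
  have hshift (k b z) : D (shiftHom Γ k b) (shiftHom Γ k z) = D b z :=
    finprod_comp_equiv (Equiv.subRight k.toAdd) (f := fun i ↦ d ((b : ℤ → Γ) i) ((z : ℤ → Γ) i))
  refine ⟨.semidirect (shiftHom Γ) μ β, D, fun k f hf ↦ Mean.semidirect_inr_mul hμ k hf,
    fun b ↦ isDensity_semidirect_inl (hβ b).bounded fun k ↦ ?_, hshift, fun a b hab z ↦ ?_⟩
  · convert hβ (shiftHom Γ k⁻¹ b) using 2 with z
    rw [← hshift k⁻¹ b, map_inv, MulAut.inv_apply_self]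
  · refine finprod_congr fun i ↦ ?_
    by_cases ha : (a : ℤ → Γ) i = 1
    · simp [ha]
    · simp [notMem_mulSupport.1 (Set.disjoint_left.1 hab ha), hd]

theorem IsLampMean.asymptoticallyInvariant {κ : Mean (WreathZ Γ)}
    {D : finSupp ℤ Γ → finSupp ℤ Γ → ℝ} (h : IsLampMean κ D) {n : ℕ} {b : Fin n → finSupp ℤ Γ}
    {t : ℕ → Multiplicative ℤ}
    (ht : Pairwise fun i j ↦ ∀ l, Disjoint (mulSupport (shiftHom Γ (t i) (b l) : ℤ → Γ))
      (mulSupport (shiftHom Γ (t j) (b l) : ℤ → Γ))) :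
    AsymptoticallyInvariant (κ.piFin n)
      fun j ↦ (SemidirectProduct.inl.compLeft (Fin n)) fun l ↦ shiftHom Γ (t j) (b l) := by
  choose B hB using fun l ↦ (h.isDensity_inl (b l)).bounded
  refine asymptoticallyInvariant_of_isDensity (B := ∏ l, B l)
    (fun j ↦ IsDensity.piFin fun l ↦ h.isDensity_inl (shiftHom Γ (t j) (b l))) (fun j w ↦ ?_)
    fun i j hij w ↦ Finset.prod_congr rfl fun l _ ↦ ?_
  · rw [Finset.abs_prod]
    refine Finset.prod_le_prod (fun _ _ ↦ abs_nonneg _) fun l _ ↦ ?_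
    rw [← h.shift (t j)⁻¹, map_inv, MulAut.inv_apply_self]
    exact hB l (.inl _)
  · simpa using h.mul_left _ _ (ht hij l) (w l).left

end WreathMean

section ListChains

variable {X W : Type*}

/-- The alternating sum `∑ᵢ (-1)ⁱ f (l with its i-th entry deleted)`. Homogeneous cochains are
encoded as functions on lists, so that all degrees are treated at once by recursion. -/
def boundary : List W → (List W → ℝ) →ₗ[ℝ] ℝ
  | [] => 0
  | a :: l => LinearMap.proj l - boundary l ∘ₗ LinearMap.funLeft ℝ ℝ (List.cons a)

theorem boundary_cons (a : W) (l : List W) (f : List W → ℝ) :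
    boundary (a :: l) f = f l - boundary l fun l' ↦ f (a :: l') :=
  rfl

theorem boundary_sub_fun (l : List W) (f g : List W → ℝ) :
    boundary l (fun l' ↦ f l' - g l') = boundary l f - boundary l g :=
  map_sub (boundary l) f g

theorem boundary_map (φ : X → W) (l : List X) (f : List W → ℝ) :
    boundary (l.map φ) f = boundary l fun l' ↦ f (l'.map φ) := by
  induction l generalizing f with
  | nil => rfl
  | cons a l ih => simp only [List.map_cons, boundary_cons, ih]

theorem boundary_congr_of_length {l : List W} {f g : List W → ℝ}
    (h : ∀ l', l'.length + 1 = l.length → f l' = g l') : boundary l f = boundary l g := by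
  induction l generalizing f g with
  | nil => rfl
  | cons a l ih =>
    rw [boundary_cons, boundary_cons, h l rfl, ih fun l' hl' ↦ h _ (by simp [hl'])]

theorem boundary_const (l : List W) (c : ℝ) :
    boundary l (fun _ ↦ c) = if Odd l.length then c else 0 := by
  induction l with
  | nil => simp [boundary]
  | cons a l ih =>
    rw [boundary_cons, ih]
    by_cases h : Odd l.length <;> simp [h, Nat.odd_add_one]

theorem exists_eq_ofFn {n : ℕ} {l : List W} (hl : l.length = n) :
    ∃ y : Fin n → W, l = List.ofFn y := by
  subst hl
  exact ⟨l.get, (List.ofFn_get l).symm⟩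

theorem boundary_ofFn {n : ℕ} (y : Fin (n + 1) → W) (f : List W → ℝ) :
    boundary (List.ofFn y) f =
      ∑ i : Fin (n + 1), (-1 : ℝ) ^ (i : ℕ) * f (List.ofFn fun j ↦ y (i.succAbove j)) := by
  induction n generalizing f with
  | zero => simp [boundary]
  | succ n ih =>
    rw [List.ofFn_succ, boundary_cons, ih, Fin.sum_univ_succ (n := n + 1), sub_eq_add_neg,
      ← Finset.sum_neg_distrib]
    congr 1
    · simp
    · refine Finset.sum_congr rfl fun i _ ↦ ?_
      simp only [List.ofFn_succ (f := fun j ↦ y (i.succ.succAbove j)), Fin.succ_succAbove_zero,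
        Fin.succ_succAbove_succ, Fin.val_succ, pow_succ, mul_neg_one, neg_mul]

theorem Mean.map_boundary (m : Mean X) (l : List W) (f : X → List W → ℝ) :
    m (fun x ↦ boundary l (f x)) = boundary l fun l' ↦ m fun x ↦ f x l' := by
  induction l generalizing f with
  | nil => exact m.map_fun_const 0
  | cons a l ih => simp only [boundary_cons, m.map_fun_sub, ih]

end ListChains

section Averaging

variable {W : Type*} [Group W] (κ : Mean W)

/-- The law of the list `[w₁ * x₁, …, wₙ * xₙ]`, where `l = [w₁, …, wₙ]` and the `xᵢ` are
independent with law `κ`. -/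
def Mean.mulList : List W → Mean (List W)
  | [] => .dirac []
  | w :: l => κ.bind fun x ↦ (Mean.mulList l).map (List.cons (w * x))

/-- The chain homotopy between the identity and `κ.mulList` which interpolates between `l` and
`[w₁ * x₁, …, wₙ * xₙ]` one entry at a time. -/
def mulListHomotopy : List W → (List W → ℝ) →ₗ[ℝ] ℝ
  | [] => 0
  | w :: l => ((κ.mulList (w :: l)).toLinearMap - mulListHomotopy l) ∘ₗ
      LinearMap.funLeft ℝ ℝ (List.cons w)

theorem Mean.mulList_cons (w : W) (l : List W) (f : List W → ℝ) :
    κ.mulList (w :: l) f = κ fun x ↦ κ.mulList l fun l' ↦ f (w * x :: l') :=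
  rfl

theorem mulListHomotopy_cons (w : W) (l : List W) (f : List W → ℝ) :
    mulListHomotopy κ (w :: l) f =
      κ.mulList (w :: l) (fun l' ↦ f (w :: l')) - mulListHomotopy κ l fun l' ↦ f (w :: l') :=
  rfl

theorem Mean.mulList_boundary (l : List W) (f : List W → ℝ) :
    κ.mulList l (fun l' ↦ boundary l' f) = boundary l fun l' ↦ κ.mulList l' f := by
  induction l generalizing f with
  | nil => rfl
  | cons w l ih =>
    simp only [mulList_cons, boundary_cons, map_fun_sub, ih, map_fun_const, map_boundary]

theorem mulListHomotopy_boundary_add (l : List W) (f : List W → ℝ) :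
    mulListHomotopy κ l (fun l' ↦ boundary l' f) + boundary l (fun l' ↦ mulListHomotopy κ l' f) =
      κ.mulList l f - f l := by
  induction l generalizing f with
  | nil => simp [mulListHomotopy, boundary, Mean.mulList]
  | cons w l ih =>
    have hsub (f g : List W → ℝ) : mulListHomotopy κ l (fun l' ↦ f l' - g l') =
        mulListHomotopy κ l f - mulListHomotopy κ l g := map_sub _ f g
    have hchain := κ.mulList_boundary (w :: l) fun l' ↦ f (w :: l')
    simp only [boundary_cons, mulListHomotopy_cons, Mean.map_fun_sub, hsub, boundary_sub_fun]
      at hchain ⊢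
    linarith [ih fun l' ↦ f (w :: l')]

theorem Mean.mulList_map_mul_left (g : W) (l : List W) (f : List W → ℝ) :
    κ.mulList (l.map (g * ·)) f = κ.mulList l fun l' ↦ f (l'.map (g * ·)) := by
  induction l generalizing f with
  | nil => rfl
  | cons w l ih => simp only [List.map_cons, mulList_cons, ih, mul_assoc]

theorem mulListHomotopy_map_mul_left (g : W) (l : List W) (f : List W → ℝ) :
    mulListHomotopy κ (l.map (g * ·)) f = mulListHomotopy κ l fun l' ↦ f (l'.map (g * ·)) := by
  induction l generalizing f with
  | nil => rfl
  | cons w l ih =>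
    rw [List.map_cons, mulListHomotopy_cons, mulListHomotopy_cons, ih, ← List.map_cons,
      κ.mulList_map_mul_left]
    rfl

theorem abs_mulListHomotopy_le (l : List W) {f : List W → ℝ} {C : ℝ} (hf : ∀ l, |f l| ≤ C) :
    |mulListHomotopy κ l f| ≤ l.length * C := by
  induction l generalizing f with
  | nil => simp [mulListHomotopy]
  | cons w l ih =>
    rw [mulListHomotopy_cons, List.length_cons, Nat.cast_succ, add_one_mul, add_comm]
    exact (abs_sub _ _).trans
      (add_le_add ((κ.mulList (w :: l)).abs_le fun _ ↦ hf _) (ih fun _ ↦ hf _))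

theorem Mean.mulList_ofFn {n : ℕ} (y : Fin n → W) (f : List W → ℝ) :
    κ.mulList (List.ofFn y) f = κ.piFin n fun x ↦ f (List.ofFn (y * x)) := by
  induction n generalizing f with
  | zero => rfl
  | succ n ih =>
    rw [List.ofFn_succ, mulList_cons]
    simp only [ih, piFin, bind_apply, map_apply]
    congr! 4 with x z
    simp [List.ofFn_succ, Pi.mul_def]

theorem Mean.mulList_congr {l l' : List W}
    (h : List.Forall₂ (fun w w' ↦ ∀ f ∈ boundedFunctions W,
      κ (fun x ↦ f (w * x)) = κ fun x ↦ f (w' * x)) l l')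
    {f : List W → ℝ} (hf : f ∈ boundedFunctions (List W)) : κ.mulList l f = κ.mulList l' f := by
  induction h generalizing f with
  | nil => rfl
  | cons hw _ ih =>
    rename_i w w' l l' _
    simp only [mulList_cons, ih (comp_mem_boundedFunctions hf (List.cons _))]
    exact hw _ (apply_mem_boundedFunctions (fun u ↦ (κ.mulList l').map (List.cons u)) hf)

theorem boundary_const_sub_mulListHomotopy {f : List W → ℝ} {c : ℝ} {l : List W}
    (hf : ∀ l', boundary l' f = 0) (hc : ∀ l', l'.length = l.length → κ.mulList l' f = c) :
    boundary l (fun l' ↦ c - mulListHomotopy κ l' f) = f l := by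
  have hconst : boundary l (fun _ ↦ c) = c := by
    rw [boundary_const, ite_eq_left_iff]
    intro hl
    have hchain := κ.mulList_boundary (1 :: l) f
    rw [boundary_congr_of_length (g := fun _ ↦ c) fun l' hl' ↦ hc l' (by simpa using hl'),
      boundary_const, List.length_cons, if_pos (Nat.odd_add_one.2 hl)] at hchain
    simpa only [hf, Mean.map_fun_const] using hchain
  have hhomotopy := mulListHomotopy_boundary_add κ l f
  have hzero : mulListHomotopy κ l (fun l' ↦ boundary l' f) = 0 := by
    simp only [hf]
    exact map_zero (mulListHomotopy κ l)
  rw [boundary_sub_fun, hconst]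
  linarith [hc l rfl]

end Averaging

section Primitives

variable {W V : Type*} [Group W] [NormedAddCommGroup V] [NormedSpace ℝ V]
  {ρ : W →* V ≃ₗᵢ[ℝ] V} {C : ℝ} {n : ℕ}

/-- `F` is a homogeneous `W`-equivariant cochain, bounded by `C`, with values in the dual of `V`,
written as a function of a vector of `V` and of a list of elements of `W` of any length. -/
structure IsHomogeneousCochain (ρ : W →* V ≃ₗᵢ[ℝ] V) (C : ℝ) (F : V →ₗ[ℝ] List W → ℝ) : Prop where
  abs_le : ∀ v l, |F v l| ≤ C * ‖v‖
  equivariant : ∀ g v l, F (ρ g v) (l.map (g * ·)) = F v l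

theorem IsHomogeneousCochain.mem_boundedFunctions {F : V →ₗ[ℝ] List W → ℝ}
    (hF : IsHomogeneousCochain ρ C F) (v : V) : F v ∈ boundedFunctions (List W) :=
  ⟨C * ‖v‖, hF.abs_le v⟩

/-- The homogeneous form `(y₀, …, yₙ) ↦ y₀ • f (y₀⁻¹ y₁, …, yₙ₋₁⁻¹ yₙ)` of an inhomogeneous
cochain, extended by zero to lists of the wrong length. -/
noncomputable def homogenize (ρ : W →* V ≃ₗᵢ[ℝ] V) (f : (Fin n → W) → (V →L[ℝ] ℝ)) :
    V →ₗ[ℝ] List W → ℝ :=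
  .pi fun l ↦ if l.length = n + 1 then
    contragredient ρ (l.getD 0 1) (f fun i ↦ (l.getD i 1)⁻¹ * l.getD (i + 1) 1) else 0

theorem homogenize_ofFn (f : (Fin n → W) → (V →L[ℝ] ℝ)) (v : V) (y : Fin (n + 1) → W) :
    homogenize ρ f v (List.ofFn y) =
      contragredient ρ (y 0) (f fun i ↦ (y i.castSucc)⁻¹ * y i.succ) v := by
  have hget (i : Fin (n + 1)) : (List.ofFn y).getD i 1 = y i := by
    rw [List.getD_eq_getElem _ _ (by simp [i.is_le]), List.getElem_ofFn]
  have h0 : (List.ofFn y).getD 0 1 = y 0 := hget 0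
  have hcast (i : Fin n) : (List.ofFn y).getD i 1 = y i.castSucc := hget i.castSucc
  have hsucc (i : Fin n) : (List.ofFn y).getD (i + 1) 1 = y i.succ := hget i.succ
  simp only [homogenize, LinearMap.pi_apply, List.length_ofFn, if_true, h0, hcast, hsucc,
    ContinuousLinearMap.coe_coe]

theorem homogenize_of_length_ne (f : (Fin n → W) → (V →L[ℝ] ℝ)) (v : V) {l : List W}
    (hl : l.length ≠ n + 1) : homogenize ρ f v l = 0 := by
  simp [homogenize, hl]

theorem homogenize_partialProd (f : (Fin n → W) → (V →L[ℝ] ℝ)) (v : V) (g : Fin n → W) :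
    homogenize ρ f v (List.ofFn (Fin.partialProd g)) = f g v := by
  rw [homogenize_ofFn]
  simp [contragredient, Fin.partialProd_right_inv]

theorem contragredient_mul_apply (g h : W) (φ : V →L[ℝ] ℝ) (v : V) :
    contragredient ρ (g * h) φ (ρ g v) = contragredient ρ h φ v := by
  simp [contragredient]

theorem homogenize_map_mul_left (f : (Fin n → W) → (V →L[ℝ] ℝ)) (g : W) (v : V) (l : List W) :
    homogenize ρ f (ρ g v) (l.map (g * ·)) = homogenize ρ f v l := by
  by_cases hl : l.length = n + 1
  · obtain ⟨y, rfl⟩ := exists_eq_ofFn hl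
    simp only [List.map_ofFn, homogenize_ofFn, comp_apply, contragredient_mul_apply,
      mul_inv_rev, mul_assoc, inv_mul_cancel_left]
  · rw [homogenize_of_length_ne f v hl, homogenize_of_length_ne f _ (by simpa using hl)]

theorem isHomogeneousCochain_homogenize {f : (Fin n → W) → (V →L[ℝ] ℝ)} (hf : ∀ g, ‖f g‖ ≤ C) :
    IsHomogeneousCochain ρ C (homogenize ρ f) where
  abs_le v l := by
    by_cases hl : l.length = n + 1
    · obtain ⟨y, rfl⟩ := exists_eq_ofFn hl
      rw [homogenize_ofFn, ← (ρ (y 0)⁻¹).norm_map v]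
      exact (f _).le_of_opNorm_le (hf _) _
    · rw [homogenize_of_length_ne f v hl, abs_zero]
      exact mul_nonneg ((norm_nonneg _).trans (hf 1)) (norm_nonneg v)
  equivariant := homogenize_map_mul_left f

theorem bddDelta_apply_eq_boundary {F : V →ₗ[ℝ] List W → ℝ}
    (hF : ∀ g v l, F (ρ g v) (l.map (g * ·)) = F v l) {b : (Fin n → W) → (V →L[ℝ] ℝ)}
    (hb : ∀ g v, b g v = F v (List.ofFn (Fin.partialProd g))) (g : Fin (n + 1) → W) (v : V) :
    bddDelta (contragredient ρ) n b g v = boundary (List.ofFn (Fin.partialProd g)) (F v) := by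
  have hface (i : Fin (n + 1)) : b (Fin.contractNth i (· * ·) g) v =
      F v (List.ofFn fun j ↦ Fin.partialProd g (i.succ.succAbove j)) := by
    rw [hb, Fin.partialProd_contractNth]
    rfl
  have hfirst : contragredient ρ (g 0) (b fun j ↦ g j.succ) v =
      F v (List.ofFn fun j ↦ Fin.partialProd g j.succ) := by
    change b (fun j ↦ g j.succ) (ρ (g 0)⁻¹ v) = _
    rw [hb, ← hF (g 0), List.map_ofFn]
    congr! 2
    · simp
    · ext j
      exact (Fin.partialProd_succ' g j).symm
  have hlast : Fin.contractNth (Fin.last n) (· * ·) g = fun j ↦ g j.castSucc := by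
    ext j
    simp [Fin.contractNth]
  rw [boundary_ofFn, Fin.sum_univ_succ, Fin.sum_univ_castSucc, ← add_assoc, ← hface (Fin.last n),
    hlast]
  simp only [← hface, Fin.succAbove_zero, ← hfirst]
  simp only [bddDelta, add_apply, sum_apply, smul_apply, smul_eq_mul, Fin.val_zero, pow_zero,
    one_mul, Fin.val_succ, Fin.val_castSucc, Fin.val_last]
  rfl

theorem boundary_homogenize_eq_zero {f : (Fin n → W) → (V →L[ℝ] ℝ)}
    (hf : bddDelta (contragredient ρ) n f = 0) (v : V) (l : List W) :
    boundary l (homogenize ρ f v) = 0 := by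
  by_cases hl : l.length = n + 2
  · obtain ⟨y, rfl⟩ := exists_eq_ofFn hl
    rw [← Fin.partialProd_left_inv y]
    set g : Fin (n + 1) → W := fun i ↦ (y i.castSucc)⁻¹ * y i.succ
    have hy : List.ofFn (y 0 • Fin.partialProd g) =
        (List.ofFn (Fin.partialProd g)).map (y 0 * ·) := by
      rw [List.map_ofFn]
      rfl
    have hv : ρ (y 0) (ρ (y 0)⁻¹ v) = v := by simp
    rw [hy, boundary_map, ← hv]
    simp only [homogenize_map_mul_left]
    rw [← bddDelta_apply_eq_boundary (homogenize_map_mul_left f)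
      (fun g v ↦ (homogenize_partialProd f v g).symm), hf]
    rfl
  · rw [boundary_congr_of_length (g := fun _ ↦ 0), boundary_const, ite_self]
    exact fun l' hl' ↦ homogenize_of_length_ne f v (by omega)

theorem exists_primitive_of_mulList_eq {κ : Mean W}
    (hκ : ∀ F, IsHomogeneousCochain ρ C F → ∀ v l l', l.length = l'.length →
      κ.mulList l (F v) = κ.mulList l' (F v))
    {f : (Fin (n + 1) → W) → (V →L[ℝ] ℝ)} (hf : ∀ g, ‖f g‖ ≤ C)
    (hδ : bddDelta (contragredient ρ) (n + 1) f = 0) :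
    ∃ b : (Fin n → W) → (V →L[ℝ] ℝ),
      (∀ g, ‖b g‖ ≤ (n + 2) * C) ∧ bddDelta (contragredient ρ) n b = f := by
  set F := homogenize ρ f
  have hF : IsHomogeneousCochain ρ C F := isHomogeneousCochain_homogenize hf
  let l₀ : List W := .replicate (n + 2) 1
  let H : V →ₗ[ℝ] List W → ℝ :=
    .pi fun l ↦ ((κ.mulList l₀).toLinearMap - mulListHomotopy κ l) ∘ₗ F
  have hHF (v : V) (l : List W) : H v l = κ.mulList l₀ (F v) - mulListHomotopy κ l (F v) := rfl
  have hH (g : W) (v : V) (l : List W) : H (ρ g v) (l.map (g * ·)) = H v l := by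
    rw [hHF, hHF, hκ F hF _ l₀ (l₀.map (g * ·)) (by simp), κ.mulList_map_mul_left,
      mulListHomotopy_map_mul_left]
    simp only [hF.equivariant]
  have hbound (g : Fin n → W) (v : V) :
      ‖H v (List.ofFn (Fin.partialProd g))‖ ≤ (n + 2) * C * ‖v‖ := by
    have h₁ := (κ.mulList l₀).abs_le (hF.abs_le v)
    have h₂ := abs_mulListHomotopy_le κ (List.ofFn (Fin.partialProd g)) (hF.abs_le v)
    rw [List.length_ofFn, Nat.cast_succ] at h₂
    refine (abs_sub _ _).trans ((add_le_add h₁ h₂).trans_eq ?_)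
    ring
  let b (g : Fin n → W) : V →L[ℝ] ℝ :=
    (LinearMap.proj (List.ofFn (Fin.partialProd g)) ∘ₗ H).mkContinuous _ (hbound g)
  have hC : 0 ≤ C := (norm_nonneg _).trans (hf 1)
  refine ⟨b, fun g ↦ LinearMap.mkContinuous_norm_le _ (by positivity) _, ?_⟩
  ext g v
  rw [bddDelta_apply_eq_boundary hH (fun _ _ ↦ rfl), ← homogenize_partialProd f]
  exact boundary_const_sub_mulListHomotopy κ (boundary_homogenize_eq_zero hδ v)
    fun l' hl' ↦ hκ F hF v _ _ (by simp [hl', l₀])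

end Primitives

section WreathAveraging

variable {Γ V : Type*} [Group Γ] [NormedAddCommGroup V] [NormedSpace ℝ V] {κ : Mean (WreathZ Γ)}
  {D : finSupp ℤ Γ → finSupp ℤ Γ → ℝ} {ρ : WreathZ Γ →* V ≃ₗᵢ[ℝ] V} {C : ℝ}
  {F : V →ₗ[ℝ] List (WreathZ Γ) → ℝ}

theorem IsLampMean.mulList_map_inl_left (h : IsLampMean κ D) (l : List (WreathZ Γ))
    {f : List (WreathZ Γ) → ℝ} (hf : f ∈ boundedFunctions (List (WreathZ Γ))) :
    κ.mulList (l.map fun w ↦ .inl w.left) f = κ.mulList l f := by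
  refine κ.mulList_congr ?_ hf
  rw [List.forall₂_map_left_iff, List.forall₂_same]
  intro w _ f hf
  rw [← h.inr_mul w.right _ (comp_mem_boundedFunctions hf (.inl w.left * ·))]
  simp only [← mul_assoc, SemidirectProduct.inl_left_mul_inr_right]

theorem IsLampMean.mulList_map_shiftHom (h : IsLampMean κ D) (hF : IsHomogeneousCochain ρ C F)
    (k : Multiplicative ℤ) (v : V) (l : List (finSupp ℤ Γ)) :
    κ.mulList (l.map fun b ↦ .inl (shiftHom Γ k b)) (F (ρ (.inr k) v)) =
      κ.mulList (l.map .inl) (F v) := by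
  have hmap : (l.map fun b ↦ (.inl (shiftHom Γ k b) : WreathZ Γ)) =
        ((l.map .inl).map fun w : WreathZ Γ ↦ .inr k * w).map fun w ↦ .inl w.left := by
    simp [comp_def]
  rw [hmap, h.mulList_map_inl_left _ (hF.mem_boundedFunctions _), κ.mulList_map_mul_left]
  simp only [hF.equivariant]

theorem IsLampMean.mulList_inl_eq [CompleteSpace V]
    [TopologicalSpace.SeparableSpace (V →L[ℝ] ℝ)] (h : IsLampMean κ D)
    (hF : IsHomogeneousCochain ρ C F) {n : ℕ} (v : V) (x y : Fin n → finSupp ℤ Γ) :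
    κ.mulList (List.ofFn fun l ↦ .inl (x l)) (F v) =
      κ.mulList (List.ofFn fun l ↦ .inl (y l)) (F v) := by
  let Ψ (x : Fin n → finSupp ℤ Γ) : V →L[ℝ] ℝ :=
    ((κ.mulList (List.ofFn fun l ↦ .inl (x l))).toLinearMap ∘ₗ F).mkContinuous C
      fun v ↦ Mean.abs_le _ (hF.abs_le v)
  have hΨ (x v) : Ψ x v = κ.piFin n fun ω ↦ F v (List.ofFn
      (SemidirectProduct.inl.compLeft (Fin n) x * ω)) := κ.mulList_ofFn _ (F v)
  have hΨ_bound (x) : ‖Ψ x‖ ≤ max C 0 := LinearMap.mkContinuous_norm_le' _ _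
  have hconst (x) : Ψ x = Ψ 1 := by
    refine apply_eq_apply_one_of_asymptoticallyInvariant
      (fun v ↦ comp_mem_boundedFunctions (hF.mem_boundedFunctions v) List.ofFn) hΨ hΨ_bound
      (fun x x₀ ↦ ?_) x
    obtain ⟨t, hcomm, hx, hx₀⟩ := exists_separating_shifts x x₀
    refine ⟨fun j ↦ MulEquiv.piCongrRight fun _ ↦ shiftHom Γ (t j), fun j ↦ ρ (.inr (t j)),
      fun j y v ↦ ?_, fun j ↦ funext fun l ↦ commute_of_disjoint_mulSupport (hcomm j l),
      h.asymptoticallyInvariant hx, ?_⟩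
    · have := h.mulList_map_shiftHom hF (t j) v (List.ofFn y)
      rwa [List.map_ofFn, List.map_ofFn] at this
    · convert h.asymptoticallyInvariant hx₀ using 4
      rw [map_inv]
      rfl
  exact congrArg (· v) ((hconst x).trans (hconst y).symm)

theorem IsLampMean.mulList_eq [CompleteSpace V] [TopologicalSpace.SeparableSpace (V →L[ℝ] ℝ)]
    (h : IsLampMean κ D) (hF : IsHomogeneousCochain ρ C F) (v : V) {l l' : List (WreathZ Γ)}
    (hl : l.length = l'.length) : κ.mulList l (F v) = κ.mulList l' (F v) := by
  generalize hl' : l'.length = n at hl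
  obtain ⟨y, rfl⟩ := exists_eq_ofFn hl
  obtain ⟨y', rfl⟩ := exists_eq_ofFn hl'
  rw [← h.mulList_map_inl_left (List.ofFn y) (hF.mem_boundedFunctions v),
    ← h.mulList_map_inl_left (List.ofFn y') (hF.mem_boundedFunctions v), List.map_ofFn,
    List.map_ofFn]
  exact h.mulList_inl_eq hF v _ _

theorem exists_primitive_wreathZ_of_countable [Countable Γ] [CompleteSpace V]
    [TopologicalSpace.SeparableSpace (V →L[ℝ] ℝ)] {n : ℕ}
    {f : (Fin (n + 1) → WreathZ Γ) → (V →L[ℝ] ℝ)} (hf : ∀ g, ‖f g‖ ≤ C)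
    (hδ : bddDelta (contragredient ρ) (n + 1) f = 0) :
    ∃ b : (Fin n → WreathZ Γ) → (V →L[ℝ] ℝ),
      (∀ g, ‖b g‖ ≤ (n + 2) * C) ∧ bddDelta (contragredient ρ) n b = f :=
  have ⟨_, _, h⟩ := exists_isLampMean Γ
  exists_primitive_of_mulList_eq (fun _ hF v _ _ hl ↦ h.mulList_eq hF v hl) hf hδ

end WreathAveraging

section ChangeOfGroup

variable {W W' V : Type*} [Group W] [Group W'] [NormedAddCommGroup V] [NormedSpace ℝ V]

theorem bddDelta_comp (π : W' →* W) (ρ : W →* V ≃ₗᵢ[ℝ] V) (n : ℕ)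
    (b : (Fin n → W) → (V →L[ℝ] ℝ)) (x : Fin (n + 1) → W') :
    bddDelta (contragredient ρ) n b (π ∘ x) =
      bddDelta (contragredient (ρ.comp π)) n (fun y ↦ b (π ∘ y)) x := by
  simp only [bddDelta, contragredient, comp_def, MonoidHom.comp_apply, map_inv,
    ← map_mul, ← apply_ite π]

theorem exists_primitive_on_range {π : W' →* W} (hπ : Injective π) {ρ : W →* V ≃ₗᵢ[ℝ] V} {n : ℕ}
    {f : (Fin (n + 1) → W) → (V →L[ℝ] ℝ)} {C : ℝ}
    (h : ∃ b : (Fin n → W') → (V →L[ℝ] ℝ),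
      (∀ x, ‖b x‖ ≤ C) ∧ bddDelta (contragredient (ρ.comp π)) n b = fun x ↦ f (π ∘ x)) :
    ∃ b : (Fin n → W) → (V →L[ℝ] ℝ), (∀ g, ‖b g‖ ≤ C) ∧
      ∀ g, (∀ i, g i ∈ π.range) → bddDelta (contragredient ρ) n b g = f g := by
  obtain ⟨b, hb, hδ⟩ := h
  have hinj : Injective fun x : Fin n → W' ↦ π ∘ x := hπ.comp_left
  refine ⟨extend (π ∘ ·) b 0, fun g ↦ ?_, fun g hg ↦ ?_⟩
  · by_cases hg : ∃ x : Fin n → W', π ∘ x = g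
    · obtain ⟨x, rfl⟩ := hg
      rw [hinj.extend_apply]
      exact hb x
    · rw [extend_apply' _ _ _ hg, Pi.zero_apply, norm_zero]
      exact (norm_nonneg _).trans (hb 1)
  · choose x hx using hg
    obtain rfl : π ∘ x = g := funext hx
    rw [bddDelta_comp]
    simp only [hinj.extend_apply]
    exact congrFun hδ x

theorem exists_primitive_of_eventually {ρ : W →* V ≃ₗᵢ[ℝ] V} {n : ℕ}
    {f : (Fin (n + 1) → W) → (V →L[ℝ] ℝ)} {C : ℝ} {ι : Type*} {l : Filter ι} [NeBot l]
    {b : ι → (Fin n → W) → (V →L[ℝ] ℝ)} (hb : ∀ i g, ‖b i g‖ ≤ C)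
    (hδ : ∀ g, ∀ᶠ i in l, bddDelta (contragredient ρ) n (b i) g = f g) :
    ∃ b' : (Fin n → W) → (V →L[ℝ] ℝ),
      (∀ g, ‖b' g‖ ≤ C) ∧ bddDelta (contragredient ρ) n b' = f := by
  obtain ⟨m, hm⟩ := Mean.exists_tendsto_of_ultrafilter (Ultrafilter.of l)
  choose b' hb' hint using fun g ↦ m.exists_weakStar_integral fun i ↦ hb i g
  have hlim (g v) : Tendsto (fun i ↦ b i g v) (Ultrafilter.of l) (𝓝 (b' g v)) := by
    rw [hint g v]
    exact hm _ ⟨C * ‖v‖, fun i ↦ (b i g).le_of_opNorm_le (hb i g) v⟩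
  refine ⟨b', hb', funext fun g ↦ ContinuousLinearMap.ext fun v ↦ ?_⟩
  refine tendsto_nhds_unique (f := fun i ↦ bddDelta (contragredient ρ) n (b i) g v)
    (l := Ultrafilter.of l) ?_
    (tendsto_nhds_of_eventually_eq <|
      ((hδ g).filter_mono (Ultrafilter.of_le l)).mono fun i hi ↦ by rw [hi])
  simp only [bddDelta, add_apply, sum_apply, smul_apply]
  exact ((hlim _ _).add (tendsto_finsetSum _ fun i _ ↦ (hlim _ _).const_smul _)).add
    ((hlim _ _).const_smul _)

end ChangeOfGroup

section WreathMap

variable {Γ G : Type*} [Group Γ] [Group G]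

/-- The homomorphism of restricted products that applies `φ` in every coordinate. -/
def finSuppMap (ι : Type*) (φ : Γ →* G) : finSupp ι Γ →* finSupp ι G :=
  ((φ.compLeft ι).comp (finSupp ι Γ).subtype).codRestrict _ fun b ↦
    (finite_mulSupport_finSupp b).subset (mulSupport_comp_subset (map_one φ) _)

/-- The homomorphism of wreath products induced by a homomorphism `φ` of the lamp groups. -/
def wreathMap (φ : Γ →* G) : WreathZ Γ →* WreathZ G :=
  SemidirectProduct.map (finSuppMap ℤ φ) (.id _) fun _ ↦ rfl

theorem wreathMap_injective {φ : Γ →* G} (hφ : Injective φ) : Injective (wreathMap φ) := by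
  intro w w' h
  have hleft : finSuppMap ℤ φ w.left = finSuppMap ℤ φ w'.left := congrArg (·.left) h
  have hright : w.right = w'.right := congrArg (·.right) h
  exact SemidirectProduct.ext (Subtype.ext (hφ.comp_left (congrArg Subtype.val hleft))) hright

theorem countable_closure {s : Set G} (hs : s.Countable) : Countable (Subgroup.closure s) := by
  have := hs.to_subtype
  have : Countable (FreeGroup s) := Quot.mk_surjective.countable
  rw [FreeGroup.closure_eq_range]
  exact (Set.countable_range (FreeGroup.lift ((↑) : s → G))).to_subtype

theorem mem_range_wreathMap_subtype {H : Subgroup G} {w : WreathZ G}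
    (hw : ∀ i, (w.left : ℤ → G) i ∈ H) : w ∈ (wreathMap H.subtype).range :=
  ⟨⟨⟨fun i ↦ ⟨_, hw i⟩, (finite_mulSupport_finSupp w.left).subset fun _ hi h ↦
    hi (Subtype.ext h)⟩, w.right⟩, rfl⟩

theorem eventually_mem_range_wreathMap (w : WreathZ G) :
    ∀ᶠ S : Finset G in atTop, w ∈ (wreathMap (Subgroup.closure (S : Set G)).subtype).range := by
  have hfin : (Set.range (w.left : ℤ → G)).Finite :=
    (((finite_mulSupport_finSupp w.left).image _).insert 1).subset
      (range_subset_insert_image_mulSupport _)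
  filter_upwards [eventually_ge_atTop hfin.toFinset] with S hS
  exact mem_range_wreathMap_subtype fun i ↦
    Subgroup.subset_closure (hS (hfin.mem_toFinset.2 ⟨i, rfl⟩))

end WreathMap

/-- For any group `G` and the restricted wreath product `W = G ≀ ℤ`,
the bounded cohomology `Hb^n(W,E)` vanishes for all `n ≥ 1` and every separable dual
Banach `W`-module `E = F*` (with the contragredient action). -/
theorem wreathZ_bounded_cohomology_vanishes.{u}
    (G : Type*) [Group G]
    (F : Type u) [NormedAddCommGroup F] [NormedSpace ℝ F] [CompleteSpace F]
    (ρ : WreathZ G →* (F ≃ₗᵢ[ℝ] F))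
    (hsep : TopologicalSpace.SeparableSpace (F →L[ℝ] ℝ)) :
    HbVanish (contragredient ρ) := by
  rintro n f ⟨C, hf⟩ hδ
  have hprim (S : Finset G) : ∃ b : (Fin n → WreathZ G) → (F →L[ℝ] ℝ),
      (∀ g, ‖b g‖ ≤ (n + 2) * C) ∧
        ∀ g, (∀ i, g i ∈ (wreathMap (Subgroup.closure (S : Set G)).subtype).range) →
          bddDelta (contragredient ρ) n b g = f g := by
    have := countable_closure S.countable_toSet
    refine exists_primitive_on_range (wreathMap_injective Subtype.val_injective)
      (exists_primitive_wreathZ_of_countable (fun x ↦ hf _) (funext fun x ↦ ?_))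
    rw [← bddDelta_comp, hδ]
    rfl
  choose b hb hbδ using hprim
  obtain ⟨b', hb', hδ'⟩ := exists_primitive_of_eventually (l := atTop) hb fun g ↦
    (eventually_all.2 fun i ↦ eventually_mem_range_wreathMap (g i)).mono fun S ↦ hbδ S g
  exact ⟨b', ⟨_, hb'⟩, hδ'⟩
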